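/- Consider the detection problem: under 𝒬, Ỹ ∈ ℝ^{N×n} has i.i.d. N(0, 1/N) entries; under 𝒫, draw v ∼ BR(N,ρ) and a uniformly random orthogonal Q ∈ ℝ^{n×n}, let Y have first column v and remaining columns i.i.d. N(0, (1/N) I_N), and observe Ỹ = YQ. For any constants ℓ ≥ 1, d ≥ 1, ε ∈ (0,1), there exist constants N₀, C₁ > 0, and there is a universal constant C₂ > 0, such that the following holds for all N ≥ N₀. Let M = M(Ỹ) be any real symmetric matrix of dimension at most N^ℓ whose entries are polynomials of degree at most d in the entries of Ỹ, and let t > 0 be any threshold. If nρ ≥ √N·(log N)^{C₂}, then it is impossible that both ℙ_𝒫{‖M‖ ≥ (1+ε)t} ≥ 1 − ε/4 and ℙ_𝒬{‖M‖ ≥ t} ≤ N^{−C₁} hold. -/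

import Mathlib

open MeasureTheory ProbabilityTheory Matrix

/-- Euclidean norm of a vector in `ℝ^k`. -/
noncomputable def eucNorm {k : ℕ} (v : Fin k → ℝ) : ℝ := Real.sqrt (∑ i, (v i) ^ 2)

/-- ℓ_p norm of a vector in `ℝ^k`. -/
noncomputable def lpNorm {k : ℕ} (p : ℝ) (v : Fin k → ℝ) : ℝ := (∑ i, |v i| ^ p) ^ (1 / p)

/-- Supremum (ℓ_∞) norm of a vector in `ℝ^k`. -/
noncomputable def supNorm {k : ℕ} (v : Fin k → ℝ) : ℝ := ⨆ i, |v i|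

/-- The Gaussian measure `N(0, σ2 · I_k)` on `ℝ^k`. -/
noncomputable def gaussVec (k : ℕ) (σ2 : NNReal) : Measure (Fin k → ℝ) :=
  Measure.pi fun _ => gaussianReal 0 σ2

instance (k : ℕ) (σ2 : NNReal) : IsProbabilityMeasure (gaussVec k σ2) := by
  unfold gaussVec; infer_instance

/-- The law of `N` i.i.d. samples from `N(0, σ2 · I_k)`. -/
noncomputable def iidGaussVec (N k : ℕ) (σ2 : NNReal) : Measure (Fin N → Fin k → ℝ) :=
  Measure.pi fun _ => gaussVec k σ2

/-- Concatenation `(a, bᵀ)ᵀ ∈ ℝ^n` of a scalar `a` with a vector `b ∈ ℝ^{n-1}`. -/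
noncomputable def rowCat {n : ℕ} (a : ℝ) (b : Fin (n - 1) → ℝ) : Fin n → ℝ :=
  fun j => if h : (j : ℕ) = 0 then a else b ⟨(j : ℕ) - 1, by have := j.isLt; omega⟩

/-- The `N × n` matrix whose rows are `y_iᵀ = (v_i, b_iᵀ)`, i.e. whose first column is `v`
and whose remaining `n - 1` columns are given by `B`. -/
noncomputable def gaussBasis {N n : ℕ} (v : Fin N → ℝ) (B : Fin N → Fin (n - 1) → ℝ) :
    Matrix (Fin N) (Fin n) ℝ :=
  Matrix.of fun i => rowCat (v i) (B i)

/-- The matrix `M(Y) = ∑_i (‖y_i‖² - (n-1)/N) y_i y_iᵀ - (3/N) I_n` built from the rows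
`y_iᵀ` of `Y`. -/
noncomputable def specMat {N n : ℕ} (Y : Matrix (Fin N) (Fin n) ℝ) :
    Matrix (Fin n) (Fin n) ℝ :=
  (∑ i, ((∑ j, (Y i j) ^ 2) - ((n : ℝ) - 1) / N) • Matrix.vecMulVec (Y i) (Y i))
    - ((3 : ℝ) / N) • (1 : Matrix (Fin n) (Fin n) ℝ)

/-- `u` is a unit leading eigenvector of the (symmetric) matrix `M`: a unit eigenvector
whose eigenvalue has the largest absolute value among all eigenvalues of `M`. -/
def IsLeadingEigen {n : ℕ} (M : Matrix (Fin n) (Fin n) ℝ) (u : Fin n → ℝ) : Prop :=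
  eucNorm u = 1 ∧ ∃ μ : ℝ, M.mulVec u = μ • u ∧
    ∀ μ' : ℝ, (∃ w : Fin n → ℝ, w ≠ 0 ∧ M.mulVec w = μ' • w) → |μ'| ≤ |μ|

/-- The quantity `η = η(N, n, v, δ)` with universal constant `C`. -/
noncomputable def etaBound (C : ℝ) (N n : ℕ) (v : Fin N → ℝ) (δ : ℝ) : ℝ :=
  C * ((eucNorm v + 1) * n * Real.sqrt (Real.log (N / δ)) / (N : ℝ) ^ ((3 : ℝ) / 2)
    + lpNorm 4 v ^ 2 * Real.sqrt (n * Real.log (N / δ)) / N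
    + lpNorm 6 v ^ 3 * (Real.sqrt n + Real.sqrt (Real.log (N / δ))) / Real.sqrt N
    + supNorm v ^ 2 * (n * Real.log (N / δ) + (Real.log (N / δ)) ^ 2) / N
    + (n * Real.log (N / δ)) ^ ((3 : ℝ) / 2) / (N : ℝ) ^ 2
    + |eucNorm v ^ 2 - 1| / N)

/-- The Bernoulli–Rademacher distribution on `ℝ`: `0` w.p. `1-ρ`, `±1/√(Nρ)` w.p. `ρ/2` each. -/
noncomputable def brMeasure (N : ℕ) (ρ : ℝ) : Measure ℝ :=
  (Real.toNNReal (1 - ρ)) • Measure.dirac 0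
    + (Real.toNNReal (ρ / 2)) • Measure.dirac (Real.sqrt (N * ρ))⁻¹
    + (Real.toNNReal (ρ / 2)) • Measure.dirac (-(Real.sqrt (N * ρ))⁻¹)

instance (N : ℕ) (ρ : ℝ) : IsFiniteMeasure (brMeasure N ρ) := by
  unfold brMeasure; infer_instance

/-- The law of a Bernoulli–Rademacher vector `v ∼ BR(N, ρ)` with i.i.d. entries. -/
noncomputable def brVec (N : ℕ) (ρ : ℝ) : Measure (Fin N → ℝ) :=
  Measure.pi fun _ => brMeasure N ρ

instance (N : ℕ) (ρ : ℝ) : IsFiniteMeasure (brVec N ρ) := by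
  unfold brVec; infer_instance

/-- Spectral (ℓ₂ operator) norm of a real matrix. -/
noncomputable def specNorm {m k : ℕ} (M : Matrix (Fin m) (Fin k) ℝ) : ℝ :=
  ‖LinearMap.toContinuousLinearMap (Matrix.toEuclideanLin M)‖

/-- All absolute moments of `f` are finite. -/
def AllLp {Ω : Type*} [MeasurableSpace Ω] (f : Ω → ℝ) (μ : Measure Ω) : Prop :=
  ∀ p : NNReal, MemLp f p μ

namespace AllLp

variable {Ω Ω' : Type*} [MeasurableSpace Ω] [MeasurableSpace Ω'] {μ : Measure Ω} {ν : Measure Ω'}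
  {f g : Ω → ℝ}

lemma integrable (hf : AllLp f μ) : Integrable f μ := memLp_one_iff_integrable.1 (hf 1)

lemma add (hf : AllLp f μ) (hg : AllLp g μ) : AllLp (fun x => f x + g x) μ :=
  fun p => (hf p).add (hg p)

lemma mul (hf : AllLp f μ) (hg : AllLp g μ) : AllLp (fun x => f x * g x) μ := fun p => by
  have : ENNReal.HolderTriple ((2 * p : NNReal) : ENNReal) ((2 * p : NNReal) : ENNReal) p := by
    constructor
    push_cast
    rw [ENNReal.mul_inv (by simp) (by simp), ← add_mul, ENNReal.inv_two_add_inv_two, one_mul]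
  exact MemLp.mul' (hg (2 * p)) (hf (2 * p))

lemma const [IsFiniteMeasure μ] (c : ℝ) : AllLp (fun _ : Ω => c) μ := fun _ => memLp_const c

lemma const_mul [IsFiniteMeasure μ] (c : ℝ) (hf : AllLp f μ) : AllLp (fun x => c * f x) μ :=
  (const c).mul hf

lemma sum [IsFiniteMeasure μ] {ι : Type*} (s : Finset ι) {F : ι → Ω → ℝ}
    (h : ∀ i ∈ s, AllLp (F i) μ) : AllLp (fun x => ∑ i ∈ s, F i x) μ := by
  classical
  induction s using Finset.induction_on with
  | empty => simpa using const 0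
  | insert a s ha ih =>
    simp only [Finset.sum_insert ha]
    exact (h a (Finset.mem_insert_self _ _)).add
      (ih fun i hi => h i (Finset.mem_insert_of_mem hi))

lemma prod [IsFiniteMeasure μ] {ι : Type*} (s : Finset ι) {F : ι → Ω → ℝ}
    (h : ∀ i ∈ s, AllLp (F i) μ) : AllLp (fun x => ∏ i ∈ s, F i x) μ := by
  classical
  induction s using Finset.induction_on with
  | empty => simpa using const 1
  | insert a s ha ih =>
    simp only [Finset.prod_insert ha]
    exact (h a (Finset.mem_insert_self _ _)).mul
      (ih fun i hi => h i (Finset.mem_insert_of_mem hi))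

lemma pow [IsFiniteMeasure μ] (hf : AllLp f μ) (k : ℕ) : AllLp (fun x => f x ^ k) μ := by
  simpa using prod (Finset.range k) (F := fun _ => f) fun _ _ => hf

lemma comp_mp {φ : Ω' → Ω} (hf : AllLp f μ) (hφ : MeasurePreserving φ ν μ) :
    AllLp (fun x => f (φ x)) ν := fun p => (hf p).comp_measurePreserving hφ

lemma of_bound [IsFiniteMeasure μ] (hf : AEStronglyMeasurable f μ) (C : ℝ)
    (h : ∀ᵐ x ∂μ, ‖f x‖ ≤ C) : AllLp f μ := fun _ => MemLp.of_bound hf C h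

lemma polynomial_eval [IsFiniteMeasure μ] (hf : AllLp f μ) (p : Polynomial ℝ) :
    AllLp (fun x => p.eval (f x)) μ := by
  simp only [Polynomial.eval_eq_sum_range]
  exact sum _ fun i _ => const_mul _ (hf.pow i)

lemma mvPolynomial_eval [IsFiniteMeasure μ] {ι : Type*} {F : ι → Ω → ℝ} (hF : ∀ i, AllLp (F i) μ)
    (p : MvPolynomial ι ℝ) : AllLp (fun x => MvPolynomial.eval (fun i => F i x) p) μ := by
  simp only [MvPolynomial.eval_eq]
  exact sum _ fun i _ => const_mul _ (prod _ fun j _ => (hF j).pow _)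

end AllLp

/-- The probabilists' Hermite polynomials over `ℝ`. -/
noncomputable def hermiteR : ℕ → Polynomial ℝ
  | 0 => 1
  | k + 1 => Polynomial.X * hermiteR k - Polynomial.derivative (hermiteR k)

lemma hermiteR_succ (k : ℕ) : hermiteR (k + 1) =
    Polynomial.X * hermiteR k - Polynomial.derivative (hermiteR k) := rfl

lemma derivative_hermiteR (k : ℕ) : Polynomial.derivative (hermiteR (k + 1)) =
    ((k : Polynomial ℝ) + 1) * hermiteR k := by
  induction k with
  | zero => simp [hermiteR]
  | succ k ih =>
    have h2 : Polynomial.derivative (Polynomial.derivative (hermiteR (k + 1))) =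
        ((k : Polynomial ℝ) + 1) * Polynomial.derivative (hermiteR k) := by
      rw [ih]; simp [Polynomial.derivative_mul]
    rw [hermiteR_succ (k + 1)]
    simp only [Polynomial.derivative_sub, Polynomial.derivative_mul, Polynomial.derivative_X,
      one_mul, h2]
    rw [ih]
    push_cast
    linear_combination (-(k : Polynomial ℝ) - 1) * (hermiteR_succ k)

lemma X_mul_hermiteR_succ (k : ℕ) : Polynomial.X * hermiteR (k + 1) =
    hermiteR (k + 2) + ((k : Polynomial ℝ) + 1) * hermiteR k := by
  rw [hermiteR_succ (k + 1), derivative_hermiteR]; ring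

lemma hermiteR_eval_succ_succ (k : ℕ) (x : ℝ) : (hermiteR (k + 2)).eval x =
    x * (hermiteR (k + 1)).eval x - (k + 1) * (hermiteR k).eval x := by
  have := congrArg (Polynomial.eval x) (X_mul_hermiteR_succ k)
  simp only [Polynomial.eval_mul, Polynomial.eval_X, Polynomial.eval_add, Polynomial.eval_natCast,
    Polynomial.eval_one] at this
  linarith

lemma hermiteR_eval_zero (x : ℝ) : (hermiteR 0).eval x = 1 := by simp [hermiteR]

lemma hermiteR_eval_one (x : ℝ) : (hermiteR 1).eval x = x := by simp [hermiteR]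

lemma hermiteR_eval_neg (k : ℕ) (x : ℝ) :
    (hermiteR k).eval (-x) = (-1) ^ k * (hermiteR k).eval x := by
  induction k using Nat.twoStepInduction with
  | zero => simp [hermiteR]
  | one => simp [hermiteR]
  | more k h0 h1 => rw [hermiteR_eval_succ_succ, hermiteR_eval_succ_succ, h0, h1]; ring

lemma abs_hermiteR_eval_le (k : ℕ) {x R : ℝ} (hR : 1 ≤ R) (hx : |x| ≤ R) :
    |(hermiteR k).eval x| ≤ k.factorial * R ^ k := by
  induction k using Nat.twoStepInduction with
  | zero => simp [hermiteR]
  | one => simpa [hermiteR] using hx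
  | more k h0 h1 =>
    rw [hermiteR_eval_succ_succ]
    have a1 : |x * (hermiteR (k + 1)).eval x| ≤ R * ((k + 1).factorial * R ^ (k + 1)) := by
      rw [abs_mul]; gcongr
    have a2 : |((k : ℝ) + 1) * (hermiteR k).eval x| ≤ (k + 1) * (k.factorial * R ^ k) := by
      rw [abs_mul, abs_of_nonneg (by positivity : (0 : ℝ) ≤ (k : ℝ) + 1)]; gcongr
    refine (abs_sub _ _).trans ((add_le_add a1 a2).trans ?_)
    have hk : R ^ k ≤ R ^ (k + 2) := pow_le_pow_right₀ hR (by omega)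
    simp only [Nat.factorial_succ]
    push_cast
    have hf : (0 : ℝ) < k.factorial := by positivity
    calc R * (((k : ℝ) + 1) * k.factorial * R ^ (k + 1)) + (k + 1) * (k.factorial * R ^ k)
        ≤ ((k : ℝ) + 1) * k.factorial * R ^ (k + 2) + (k + 1) * (k.factorial * R ^ (k + 2)) :=
          add_le_add (le_of_eq (by ring)) (by gcongr)
      _ ≤ _ := by
          have : 0 ≤ (k : ℝ) * ((k : ℝ) + 1) * k.factorial * R ^ (k + 2) := by positivity
          nlinarith

/-- The Cauchy–Schwarz inequality for integrals. -/
lemma AllLp.sq_integral_mul_le {Ω : Type*} [MeasurableSpace Ω] {μ : Measure Ω} [IsFiniteMeasure μ]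
    {f g : Ω → ℝ} (hf : AllLp f μ) (hg : AllLp g μ) :
    (∫ x, f x * g x ∂μ) ^ 2 ≤ (∫ x, f x ^ 2 ∂μ) * ∫ x, g x ^ 2 ∂μ := by
  have key : ∀ t : ℝ, 0 ≤ (∫ x, g x ^ 2 ∂μ) * (t * t) + (2 * ∫ x, f x * g x ∂μ) * t +
      ∫ x, f x ^ 2 ∂μ := by
    intro t
    have h : 0 ≤ ∫ x, (f x + t * g x) ^ 2 ∂μ := integral_nonneg fun x => sq_nonneg _
    have e : ∀ x, (f x + t * g x) ^ 2 = g x ^ 2 * (t * t) + f x * g x * (2 * t) + f x ^ 2 :=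
      fun x => by ring
    simp only [e] at h
    rw [integral_add, integral_add, integral_mul_const, integral_mul_const] at h
    · linarith
    · exact (hg.pow 2).integrable.mul_const _
    · exact (hf.mul hg).integrable.mul_const _
    · exact ((hg.pow 2).integrable.mul_const _).add ((hf.mul hg).integrable.mul_const _)
    · exact (hf.pow 2).integrable
  have := discrim_le_zero key
  rw [discrim] at this
  nlinarith

/-- Stein's identity on polynomials, for a measure `γ` on `ℝ` rescaled by `s`. -/
structure IsStein (γ : Measure ℝ) (s : ℝ) : Prop where
  allLp : AllLp (fun y => s * y) γ
  stein : ∀ p : Polynomial ℝ,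
    ∫ y, s * y * p.eval (s * y) ∂γ = ∫ y, (Polynomial.derivative p).eval (s * y) ∂γ

lemma isStein_gaussianReal {v : NNReal} {s : ℝ} (hv : v ≠ 0) (hs : s ^ 2 * v = 1) :
    IsStein (gaussianReal 0 v) s := by
  have hid : AllLp (fun y : ℝ => y) (gaussianReal 0 v) := fun p => memLp_id_gaussianReal p
  have hsl : AllLp (fun y : ℝ => s * y) (gaussianReal 0 v) := hid.const_mul s
  refine ⟨hsl, fun p => ?_⟩
  have hint : ∀ f : ℝ → ℝ, Integrable f (gaussianReal 0 v) →
      Integrable (fun x => f x * gaussianPDFReal 0 v x) := by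
    intro f hf
    rw [gaussianReal_of_var_ne_zero _ hv, integrable_withDensity_iff_integrable_smul'
      (measurable_gaussianPDF _ _) (ae_of_all _ fun _ => gaussianPDF_lt_top)] at hf
    simpa [toReal_gaussianPDF, mul_comm] using hf
  have hv0 : (v : ℝ) ≠ 0 := by exact_mod_cast hv
  have hs0 : s ≠ 0 := by rintro rfl; simp at hs
  have hpdf : ∀ x, HasDerivAt (gaussianPDFReal 0 v) (-(x / v) * gaussianPDFReal 0 v x) x := by
    intro x
    unfold gaussianPDFReal
    have h1 : HasDerivAt (fun x : ℝ => -(x - 0) ^ 2 / (2 * v)) (-(x / v)) x := by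
      have := ((((hasDerivAt_id x).sub_const 0).pow 2).neg).div_const (2 * (v : ℝ))
      convert! this using 1
      simp
      field_simp
    convert! (h1.exp).const_mul ((√(2 * Real.pi * v))⁻¹) using 1
    ring
  have hp : ∀ x, HasDerivAt (fun y => p.eval (s * y))
      ((Polynomial.derivative p).eval (s * x) * s) x := by
    intro x
    have h2 : HasDerivAt (fun y : ℝ => s * y) s x := by
      simpa using (hasDerivAt_id x).const_mul s
    exact (p.hasDerivAt (s * x)).comp x h2
  have i1 : Integrable (fun y => p.eval (s * y)) (gaussianReal 0 v) :=
    (hsl.polynomial_eval p).integrable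
  have i2 : Integrable (fun y => (Polynomial.derivative p).eval (s * y) * s) (gaussianReal 0 v) :=
    (hsl.polynomial_eval _).integrable.mul_const _
  have i3 : Integrable (fun y => p.eval (s * y) * (-(y / v))) (gaussianReal 0 v) := by
    have := (((hsl.polynomial_eval p).mul hid).const_mul (-(v : ℝ)⁻¹)).integrable
    refine this.congr (ae_of_all _ fun y => ?_)
    simp only
    ring
  have ibp := integral_mul_deriv_eq_deriv_mul_of_integrable (v' := fun x => -(x / v) * gaussianPDFReal 0 v x)
    (fun x _ => hp x) (fun x _ => hpdf x)
    (by simpa [Pi.mul_def, mul_assoc] using hint _ i3) (hint _ i2) (hint _ i1)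
  rw [integral_gaussianReal_eq_integral_smul hv, integral_gaussianReal_eq_integral_smul hv]
  have e1 : ∫ x, gaussianPDFReal 0 v x • (s * x * p.eval (s * x)) =
      -s⁻¹ * ∫ x, p.eval (s * x) * (-(x / v) * gaussianPDFReal 0 v x) := by
    rw [← integral_const_mul]
    congr 1; ext x
    have : (v : ℝ)⁻¹ = s ^ 2 := by field_simp; linarith
    rw [smul_eq_mul, div_eq_mul_inv, this]
    field_simp
  have e2 : ∫ x, gaussianPDFReal 0 v x • (Polynomial.derivative p).eval (s * x) =
      s⁻¹ * ∫ x, (Polynomial.derivative p).eval (s * x) * s * gaussianPDFReal 0 v x := by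
    rw [← integral_const_mul]
    congr 1; ext x
    rw [smul_eq_mul]
    field_simp
  rw [e1, e2, ibp]
  ring

namespace IsStein

variable {γ : Measure ℝ} [IsProbabilityMeasure γ] {s : ℝ}

lemma integrable_eval (h : IsStein γ s) (p : Polynomial ℝ) :
    Integrable (fun y => p.eval (s * y)) γ := (h.allLp.polynomial_eval p).integrable

lemma integral_hermiteR_succ_mul (h : IsStein γ s) (k : ℕ) (p : Polynomial ℝ) :
    ∫ y, (hermiteR (k + 1) * p).eval (s * y) ∂γ =
      ∫ y, (hermiteR k * Polynomial.derivative p).eval (s * y) ∂γ := by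
  have h1 := h.stein (hermiteR k * p)
  have e : ∀ y, (hermiteR (k + 1) * p).eval (s * y) = s * y * (hermiteR k * p).eval (s * y) -
      (Polynomial.derivative (hermiteR k) * p).eval (s * y) := fun y => by
    simp only [hermiteR_succ, Polynomial.eval_mul, Polynomial.eval_sub, Polynomial.eval_X]; ring
  simp only [e]
  rw [integral_sub, h1, ← integral_sub]
  · congr 1; ext y
    simp only [Polynomial.derivative_mul, Polynomial.eval_add, Polynomial.eval_mul]; ring
  · exact h.integrable_eval _
  · exact h.integrable_eval _
  · exact (h.allLp.mul (h.allLp.polynomial_eval _)).integrable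
  · exact h.integrable_eval _

lemma integral_hermiteR_mul (h : IsStein γ s) (a b : ℕ) :
    ∫ y, (hermiteR a * hermiteR b).eval (s * y) ∂γ = if a = b then (a.factorial : ℝ) else 0 := by
  induction a generalizing b with
  | zero =>
    cases b with
    | zero => simp [hermiteR]
    | succ b =>
      rw [mul_comm, h.integral_hermiteR_succ_mul]
      simp [hermiteR]
  | succ a ih =>
    rw [h.integral_hermiteR_succ_mul]
    cases b with
    | zero => simp [hermiteR]
    | succ b =>
      have e : ∀ y, (hermiteR a * Polynomial.derivative (hermiteR (b + 1))).eval (s * y) =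
          (b + 1) * (hermiteR a * hermiteR b).eval (s * y) := fun y => by
        simp only [derivative_hermiteR, Polynomial.eval_mul, Polynomial.eval_add,
          Polynomial.eval_natCast, Polynomial.eval_one]; ring
      simp only [e]
      rw [integral_const_mul, ih]
      by_cases hab : a = b
      · subst hab; simp [Nat.factorial_succ]
      · simp [hab]

lemma integral_hermiteR_pow_four_le (h : IsStein γ s) (a : ℕ) :
    ∫ y, (hermiteR a).eval (s * y) ^ 4 ∂γ ≤ 9 ^ a * (a.factorial : ℝ) ^ 2 := by
  induction a with
  | zero => simp [hermiteR]
  | succ a ih =>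
    set A := ∫ y, (hermiteR a).eval (s * y) ^ 4 ∂γ with hA
    set B := ∫ y, (hermiteR (a + 1)).eval (s * y) ^ 4 ∂γ with hB
    have hA0 : 0 ≤ A := integral_nonneg fun y => by positivity
    have hB0 : 0 ≤ B := integral_nonneg fun y => by positivity
    have e1 : B = 3 * (a + 1) * ∫ y, (hermiteR a).eval (s * y) ^ 2 *
        (hermiteR (a + 1)).eval (s * y) ^ 2 ∂γ := by
      have := h.integral_hermiteR_succ_mul a (hermiteR (a + 1) ^ 3)
      rw [hB, ← integral_const_mul]
      refine Eq.trans ?_ (this.trans ?_)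
      · congr 1; ext y; simp only [Polynomial.eval_mul, Polynomial.eval_pow]; ring
      · congr 1; ext y
        rw [Polynomial.derivative_pow, derivative_hermiteR]
        simp
        ring
    have cs := ((h.allLp.polynomial_eval (hermiteR a)).pow 2).sq_integral_mul_le
      ((h.allLp.polynomial_eval (hermiteR (a + 1))).pow 2)
    simp only [← pow_mul] at cs
    norm_num at cs
    rw [← hA, ← hB] at cs
    have h2 : B ^ 2 ≤ 9 * (a + 1) ^ 2 * A * B := by
      rw [e1, mul_pow]
      rw [← e1]
      nlinarith [mul_le_mul_of_nonneg_left cs (by positivity : (0 : ℝ) ≤ 9 * ((a : ℝ) + 1) ^ 2)]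
    have h3 : B ≤ 9 * (a + 1) ^ 2 * A := by
      by_contra hc
      push Not at hc
      have : 0 < B := lt_of_le_of_lt (by positivity) hc
      nlinarith
    calc B ≤ 9 * (a + 1) ^ 2 * A := h3
      _ ≤ 9 * (a + 1) ^ 2 * (9 ^ a * (a.factorial : ℝ) ^ 2) := by gcongr
      _ = _ := by rw [Nat.factorial_succ]; push_cast; ring

end IsStein

/-- An orthonormal system `φ` satisfying a weighted `L² → L⁴` bound on the span of `S`. -/
structure HyperSystem {X A : Type*} [MeasurableSpace X] (μ : Measure X) (φ : A → X → ℝ)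
    (w : A → ℝ) (S : Finset A) : Prop where
  allLp : ∀ a, AllLp (φ a) μ
  nonneg : ∀ a, 0 ≤ w a
  norm_one : ∀ a, ∫ x, φ a x * φ a x ∂μ = 1
  orth : ∀ a b, a ≠ b → ∫ x, φ a x * φ b x ∂μ = 0
  hyper : ∀ c : A → ℝ, ∫ x, (∑ a ∈ S, c a * φ a x) ^ 4 ∂μ ≤ (∑ a ∈ S, w a * c a ^ 2) ^ 2

/-- Parseval's identity for finite sums in an orthonormal system. -/
lemma integral_sum_sq_of_orthonormal {X A : Type*} [MeasurableSpace X] {μ : Measure X}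
    {φ : A → X → ℝ} (hL : ∀ a, AllLp (φ a) μ) (h1 : ∀ a, ∫ x, φ a x * φ a x ∂μ = 1)
    (h0 : ∀ a b, a ≠ b → ∫ x, φ a x * φ b x ∂μ = 0) (T : Finset A) (c : A → ℝ) :
    ∫ x, (∑ a ∈ T, c a * φ a x) ^ 2 ∂μ = ∑ a ∈ T, c a ^ 2 := by
  classical
  have e : ∀ x, (∑ a ∈ T, c a * φ a x) ^ 2 =
      ∑ a ∈ T, ∑ b ∈ T, (c a * c b) * (φ a x * φ b x) := fun x => by
    rw [sq, Finset.sum_mul_sum]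
    exact Finset.sum_congr rfl fun a _ => Finset.sum_congr rfl fun b _ => by ring
  simp only [e]
  have i1 : ∀ a b, Integrable (fun x => (c a * c b) * (φ a x * φ b x)) μ := fun a b =>
    ((hL a).mul (hL b)).integrable.const_mul _
  rw [integral_finsetSum _ fun a _ => integrable_finsetSum _ fun b _ => i1 a b]
  refine Finset.sum_congr rfl fun a ha => ?_
  rw [integral_finsetSum _ fun b _ => i1 a b, Finset.sum_eq_single a]
  · rw [integral_const_mul, h1]; ring
  · intro b _ hb
    rw [integral_const_mul, h0 a b hb.symm, mul_zero]
  · exact fun h => absurd ha h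

lemma Finset.sum_piFinset_fin_succ {A M : Type*} [AddCommMonoid M] {N : ℕ} (S : Finset A)
    (F : (Fin (N + 1) → A) → M) :
    ∑ α ∈ Fintype.piFinset (fun _ : Fin (N + 1) => S), F α =
      ∑ a ∈ S, ∑ β ∈ Fintype.piFinset (fun _ : Fin N => S), F (Fin.cons a β) := by
  rw [← Finset.sum_product']
  refine Finset.sum_nbij' (fun α => (α 0, fun i => α i.succ)) (fun p => Fin.cons p.1 p.2)
    ?_ ?_ ?_ ?_ ?_
  · intro α h
    simp only [Fintype.mem_piFinset, Finset.mem_product] at h ⊢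
    exact ⟨h 0, fun i => h i.succ⟩
  · intro p h
    simp only [Fintype.mem_piFinset, Finset.mem_product] at h ⊢
    exact fun i => Fin.cases h.1 h.2 i
  · intro α _; exact Fin.cons_self_tail α
  · intro p _; rfl
  · intro α _
    congr 1
    exact (Fin.cons_self_tail α).symm

lemma integral_pi_fin_succ {X : Type*} [MeasurableSpace X] (μ : Measure X) [IsProbabilityMeasure μ]
    {N : ℕ} (F : (Fin (N + 1) → X) → ℝ) :
    ∫ x, F x ∂(Measure.pi fun _ : Fin (N + 1) => μ) =
      ∫ p : X × (Fin N → X), F (Fin.cons p.1 p.2) ∂(μ.prod (Measure.pi fun _ : Fin N => μ)) := by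
  have h := measurePreserving_piFinSuccAbove (fun _ : Fin (N + 1) => μ) 0
  rw [← h.integral_comp' (g := fun p : X × (Fin N → X) => F (Fin.cons p.1 p.2))]
  congr 1; ext x
  congr 1
  exact (Fin.cons_self_tail x).symm

lemma AllLp.pi_eval {X ι : Type*} [Fintype ι] [MeasurableSpace X] {μ : Measure X}
    [IsProbabilityMeasure μ] {f : X → ℝ} (hf : AllLp f μ) (i : ι) :
    AllLp (fun x : ι → X => f (x i)) (Measure.pi fun _ : ι => μ) :=
  hf.comp_mp (measurePreserving_eval (fun _ : ι => μ) i)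

namespace HyperSystem

variable {X A : Type*} [MeasurableSpace X] {μ : Measure X} [IsProbabilityMeasure μ]
  {φ : A → X → ℝ} {w : A → ℝ} {S : Finset A}

lemma allLp_pi (h : HyperSystem μ φ w S) {ι : Type*} [Fintype ι] (α : ι → A) :
    AllLp (fun x : ι → X => ∏ i, φ (α i) (x i)) (Measure.pi fun _ : ι => μ) :=
  AllLp.prod _ fun i _ => (h.allLp (α i)).pi_eval i

lemma hyper_pi (h : HyperSystem μ φ w S) (N : ℕ) (c : (Fin N → A) → ℝ) :
    ∫ x, (∑ α ∈ Fintype.piFinset (fun _ : Fin N => S), c α * ∏ i, φ (α i) (x i)) ^ 4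
      ∂(Measure.pi fun _ : Fin N => μ) ≤
    (∑ α ∈ Fintype.piFinset (fun _ : Fin N => S), (∏ i, w (α i)) * c α ^ 2) ^ 2 := by
  induction N with
  | zero =>
    have : Fintype.piFinset (fun _ : Fin 0 => S) = {default} := by
      ext a; simp [eq_iff_true_of_subsingleton]
    rw [this]
    simp only [Finset.univ_eq_empty, Finset.prod_empty, mul_one, Finset.sum_singleton, one_mul,
      integral_const, probReal_univ, one_smul]
    exact le_of_eq (by ring)
  | succ N ih =>
    set P := Measure.pi fun _ : Fin N => μ with hP
    set T := Fintype.piFinset (fun _ : Fin N => S) with hT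
    set G : A → (Fin N → X) → ℝ := fun a y =>
      ∑ β ∈ T, c (Fin.cons a β) * ∏ i, φ (β i) (y i) with hG
    have hGL : ∀ a, AllLp (G a) P := fun a =>
      AllLp.sum _ fun β _ => (h.allLp_pi β).const_mul _
    rw [integral_pi_fin_succ]
    have e : ∀ p : X × (Fin N → X),
        (∑ α ∈ Fintype.piFinset (fun _ : Fin (N + 1) => S),
          c α * ∏ i, φ (α i) ((Fin.cons p.1 p.2 : Fin (N + 1) → X) i)) ^ 4 =
        (∑ a ∈ S, G a p.2 * φ a p.1) ^ 4 := by
      intro p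
      rw [Finset.sum_piFinset_fin_succ]
      congr 1
      refine Finset.sum_congr rfl fun a _ => ?_
      rw [hG, Finset.sum_mul]
      refine Finset.sum_congr rfl fun β _ => ?_
      simp only [Fin.prod_univ_succ, Fin.cons_zero, Fin.cons_succ]
      ring
    simp only [e]
    have hint : AllLp (fun p : X × (Fin N → X) => (∑ a ∈ S, G a p.2 * φ a p.1) ^ 4)
        (μ.prod P) :=
      AllLp.pow (AllLp.sum _ fun a _ => ((hGL a).comp_mp measurePreserving_snd).mul
        ((h.allLp a).comp_mp measurePreserving_fst)) 4
    rw [integral_prod_symm _ hint.integrable, Finset.sum_piFinset_fin_succ]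
    set Tc : A → ℝ := fun a => ∑ β ∈ T, (∏ i, w (β i)) * c (Fin.cons a β) ^ 2 with hTc
    have hTc0 : ∀ a, 0 ≤ Tc a := fun a => Finset.sum_nonneg fun β _ =>
      mul_nonneg (Finset.prod_nonneg fun i _ => h.nonneg _) (sq_nonneg _)
    have hcs : ∀ a b, ∫ y, G a y ^ 2 * G b y ^ 2 ∂P ≤ Tc a * Tc b := by
      intro a b
      have cs := ((hGL a).pow 2).sq_integral_mul_le ((hGL b).pow 2)
      simp only [← pow_mul] at cs
      norm_num at cs
      have ha : ∫ y, G a y ^ 4 ∂P ≤ Tc a ^ 2 := ih fun β => c (Fin.cons a β)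
      have hb : ∫ y, G b y ^ 4 ∂P ≤ Tc b ^ 2 := ih fun β => c (Fin.cons b β)
      refine le_of_sq_le_sq ?_ (mul_nonneg (hTc0 a) (hTc0 b))
      rw [mul_pow]
      exact cs.trans (mul_le_mul ha hb (integral_nonneg fun y => by positivity) (by positivity))
    have iab : ∀ a b, Integrable (fun y => w a * w b * (G a y ^ 2 * G b y ^ 2)) P := fun a b =>
      ((((hGL a).pow 2).mul ((hGL b).pow 2)).const_mul _).integrable
    have esq : ∀ y, (∑ a ∈ S, w a * G a y ^ 2) ^ 2 =
        ∑ a ∈ S, ∑ b ∈ S, w a * w b * (G a y ^ 2 * G b y ^ 2) := fun y => by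
      rw [sq, Finset.sum_mul_sum]
      exact Finset.sum_congr rfl fun a _ => Finset.sum_congr rfl fun b _ => by ring
    calc ∫ y, ∫ x, (∑ a ∈ S, G a y * φ a x) ^ 4 ∂μ ∂P
        ≤ ∫ y, (∑ a ∈ S, w a * G a y ^ 2) ^ 2 ∂P := by
          refine integral_mono_of_nonneg ?_ ?_ ?_
          · exact ae_of_all _ fun y => integral_nonneg fun x => by positivity
          · exact (AllLp.pow (AllLp.sum _ fun a _ => ((hGL a).pow 2).const_mul _) 2).integrable
          · exact ae_of_all _ fun y => h.hyper fun a => G a y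
      _ = ∑ a ∈ S, ∑ b ∈ S, w a * w b * ∫ y, G a y ^ 2 * G b y ^ 2 ∂P := by
          simp only [esq]
          rw [integral_finsetSum _ fun a _ => integrable_finsetSum _ fun b _ => iab a b]
          refine Finset.sum_congr rfl fun a _ => ?_
          rw [integral_finsetSum _ fun b _ => iab a b]
          exact Finset.sum_congr rfl fun b _ => integral_const_mul _ _
      _ ≤ ∑ a ∈ S, ∑ b ∈ S, w a * w b * (Tc a * Tc b) := by
          gcongr with a _ b _
          · exact mul_nonneg (h.nonneg a) (h.nonneg b)
          · exact hcs a b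
      _ = (∑ a ∈ S, w a * Tc a) ^ 2 := by
          rw [sq, Finset.sum_mul_sum]
          exact Finset.sum_congr rfl fun a _ => Finset.sum_congr rfl fun b _ => by ring
      _ = _ := by
          congr 1
          refine Finset.sum_congr rfl fun a _ => ?_
          rw [hTc, Finset.mul_sum]
          refine Finset.sum_congr rfl fun β _ => ?_
          simp only [Fin.prod_univ_succ, Fin.cons_zero, Fin.cons_succ]
          ring

/-- Tensor powers of a hypercontractive system are hypercontractive. -/
lemma pi (h : HyperSystem μ φ w S) (N : ℕ) :
    HyperSystem (Measure.pi fun _ : Fin N => μ) (fun (α : Fin N → A) x => ∏ i, φ (α i) (x i))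
      (fun α => ∏ i, w (α i)) (Fintype.piFinset fun _ => S) where
  allLp α := h.allLp_pi α
  nonneg α := Finset.prod_nonneg fun i _ => h.nonneg _
  norm_one α := by
    simp only [← Finset.prod_mul_distrib]
    rw [integral_fintype_prod_eq_prod (fun i x => φ (α i) x * φ (α i) x)]
    simp [h.norm_one]
  orth α β hαβ := by
    simp only [← Finset.prod_mul_distrib]
    rw [integral_fintype_prod_eq_prod (fun i x => φ (α i) x * φ (β i) x)]
    obtain ⟨i, hi⟩ := Function.ne_iff.1 hαβ
    exact Finset.prod_eq_zero (Finset.mem_univ i) (h.orth _ _ hi)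
  hyper c := h.hyper_pi N c

end HyperSystem

/-- The normalized Hermite functions, rescaled by `s`. -/
noncomputable def hermN (s : ℝ) (k : ℕ) (y : ℝ) : ℝ :=
  (hermiteR k).eval (s * y) / √(k.factorial)

/-- The Hermite functions form a hypercontractive system. -/
lemma IsStein.hyperSystem {γ : Measure ℝ} [IsProbabilityMeasure γ] {s : ℝ} (h : IsStein γ s)
    (D : ℕ) : HyperSystem γ (hermN s) (fun k => 9 ^ k) (Finset.range (D + 1)) := by
  have hL : ∀ k, AllLp (hermN s k) γ := fun k => by
    have e : hermN s k = fun y => (hermiteR k).eval (s * y) * (√(k.factorial : ℝ))⁻¹ := by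
      ext y; rw [hermN, div_eq_mul_inv]
    rw [e]
    exact (h.allLp.polynomial_eval (hermiteR k)).mul (AllLp.const _)
  have hI : ∀ a b, ∫ y, hermN s a y * hermN s b y ∂γ = if a = b then 1 else 0 := by
    intro a b
    have e : ∀ y, hermN s a y * hermN s b y = (hermiteR a * hermiteR b).eval (s * y) *
        ((√(a.factorial : ℝ))⁻¹ * (√(b.factorial : ℝ))⁻¹) := fun y => by
      simp only [hermN, Polynomial.eval_mul]; ring
    simp only [e]
    rw [integral_mul_const, h.integral_hermiteR_mul]
    by_cases hab : a = b
    · subst hab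
      have : (0 : ℝ) < a.factorial := by positivity
      simp only [if_true]
      rw [← mul_inv, Real.mul_self_sqrt this.le, mul_inv_cancel₀ this.ne']
    · simp [hab]
  have h4 : ∀ k, ∫ y, hermN s k y ^ 4 ∂γ ≤ 9 ^ k := by
    intro k
    have e : ∀ y, hermN s k y ^ 4 = (hermiteR k).eval (s * y) ^ 4 * ((k.factorial : ℝ) ^ 2)⁻¹ :=
      fun y => by
        rw [hermN, div_pow, div_eq_mul_inv]
        congr 2
        rw [show (4 : ℕ) = 2 * 2 from rfl, pow_mul, Real.sq_sqrt (by positivity)]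
    simp only [e]
    rw [integral_mul_const, ← div_eq_mul_inv, div_le_iff₀ (by positivity)]
    exact h.integral_hermiteR_pow_four_le k
  refine ⟨hL, fun a => by positivity, fun a => by simp [hI], fun a b hab => by simp [hI, hab], ?_⟩
  intro c
  set g : ℝ → ℝ := fun x => ∑ k ∈ Finset.range D, c (k + 1) * hermN s (k + 1) x with hg
  have hgL : AllLp g γ := AllLp.sum _ fun k _ => (hL _).const_mul _
  set W := ∑ k ∈ Finset.range D, 9 ^ (k + 1) * c (k + 1) ^ 2 with hW
  have hW0 : 0 ≤ W := Finset.sum_nonneg fun k _ => by positivity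
  have hg1 : ∫ x, g x ∂γ = 0 := by
    rw [hg, integral_finsetSum _ fun k _ => ((hL _).const_mul _).integrable]
    refine Finset.sum_eq_zero fun k _ => ?_
    rw [integral_const_mul]
    have := hI (k + 1) 0
    simp only [hermN, hermiteR_eval_zero, Nat.factorial_zero, Nat.cast_one, Real.sqrt_one, div_one,
      mul_one] at this
    simp [hermN, this]
  have hg2 : ∫ x, g x ^ 2 ∂γ ≤ W / 9 := by
    have := integral_sum_sq_of_orthonormal (fun k => hL (k + 1)) (fun k => by simp [hI])
      (fun a b hab => by simp [hI, hab]) (Finset.range D) (fun k => c (k + 1))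
    rw [hg, this, hW, Finset.sum_div]
    refine Finset.sum_le_sum fun k _ => ?_
    have h9 : (1 : ℝ) ≤ 9 ^ k := one_le_pow₀ (by norm_num)
    rw [pow_succ (9 : ℝ) k]
    nlinarith [sq_nonneg (c (k + 1))]
  set q : ℝ → ℝ := fun x => ∑ k ∈ Finset.range D, ((9 : ℝ) ^ (k + 1))⁻¹ * hermN s (k + 1) x ^ 2
    with hq
  have hqL : AllLp q γ := AllLp.sum _ fun k _ => ((hL _).pow 2).const_mul _
  have hg4q : ∀ x, g x ^ 4 ≤ W ^ 2 * q x ^ 2 := by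
    intro x
    have cs := Finset.sum_mul_sq_le_sq_mul_sq (Finset.range D) (fun k => 3 ^ (k + 1) * c (k + 1))
      (fun k => ((3 : ℝ) ^ (k + 1))⁻¹ * hermN s (k + 1) x)
    have e1 : g x = ∑ k ∈ Finset.range D, 3 ^ (k + 1) * c (k + 1) *
        (((3 : ℝ) ^ (k + 1))⁻¹ * hermN s (k + 1) x) :=
      Finset.sum_congr rfl fun k _ => by field_simp
    have e2 : W = ∑ k ∈ Finset.range D, (3 ^ (k + 1) * c (k + 1)) ^ 2 :=
      Finset.sum_congr rfl fun k _ => by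
        rw [mul_pow, ← pow_mul, mul_comm (k + 1) 2, pow_mul]; norm_num
    have e3 : q x = ∑ k ∈ Finset.range D, (((3 : ℝ) ^ (k + 1))⁻¹ * hermN s (k + 1) x) ^ 2 :=
      Finset.sum_congr rfl fun k _ => by
        rw [mul_pow, inv_pow, ← pow_mul, mul_comm (k + 1) 2, pow_mul]; norm_num
    rw [← e1, ← e2, ← e3] at cs
    calc g x ^ 4 = (g x ^ 2) ^ 2 := by ring
      _ ≤ (W * q x) ^ 2 := by gcongr
      _ = _ := by ring
  have hq2 : ∫ x, q x ^ 2 ∂γ ≤ 1 / 4 := by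
    have hkl : ∀ k l, ∫ x, hermN s k x ^ 2 * hermN s l x ^ 2 ∂γ ≤ 3 ^ k * 3 ^ l := by
      intro k l
      have cs := ((hL k).pow 2).sq_integral_mul_le ((hL l).pow 2)
      simp only [← pow_mul] at cs
      norm_num at cs
      refine le_of_sq_le_sq ?_ (by positivity)
      refine cs.trans ((mul_le_mul (h4 k) (h4 l) (integral_nonneg fun y => by positivity)
        (by positivity)).trans (le_of_eq ?_))
      rw [mul_pow, ← pow_mul, ← pow_mul, mul_comm k, mul_comm l, pow_mul, pow_mul]; norm_num
    have ikl : ∀ k l, Integrable (fun x => ((9 : ℝ) ^ (k + 1))⁻¹ * ((9 : ℝ) ^ (l + 1))⁻¹ *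
        (hermN s (k + 1) x ^ 2 * hermN s (l + 1) x ^ 2)) γ := fun k l =>
      ((((hL _).pow 2).mul ((hL _).pow 2)).const_mul _).integrable
    have e : ∀ x, q x ^ 2 = ∑ k ∈ Finset.range D, ∑ l ∈ Finset.range D,
        ((9 : ℝ) ^ (k + 1))⁻¹ * ((9 : ℝ) ^ (l + 1))⁻¹ *
        (hermN s (k + 1) x ^ 2 * hermN s (l + 1) x ^ 2) := fun x => by
      rw [hq, sq, Finset.sum_mul_sum]
      exact Finset.sum_congr rfl fun a _ => Finset.sum_congr rfl fun b _ => by ring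
    have geo : ∀ n : ℕ, ∑ k ∈ Finset.range n, ((3 : ℝ) ^ (k + 1))⁻¹ ≤
        1 / 2 - ((3 : ℝ) ^ n)⁻¹ / 2 := by
      intro n
      induction n with
      | zero => norm_num
      | succ n ih =>
        rw [Finset.sum_range_succ]
        have : ((3 : ℝ) ^ n)⁻¹ = 3 * ((3 : ℝ) ^ (n + 1))⁻¹ := by rw [pow_succ]; field_simp
        linarith
    calc ∫ x, q x ^ 2 ∂γ = ∑ k ∈ Finset.range D, ∑ l ∈ Finset.range D,
          ((9 : ℝ) ^ (k + 1))⁻¹ * ((9 : ℝ) ^ (l + 1))⁻¹ *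
          ∫ x, hermN s (k + 1) x ^ 2 * hermN s (l + 1) x ^ 2 ∂γ := by
          simp only [e]
          rw [integral_finsetSum _ fun a _ => integrable_finsetSum _ fun b _ => ikl a b]
          refine Finset.sum_congr rfl fun a _ => ?_
          rw [integral_finsetSum _ fun b _ => ikl a b]
          exact Finset.sum_congr rfl fun b _ => integral_const_mul _ _
      _ ≤ ∑ k ∈ Finset.range D, ∑ l ∈ Finset.range D,
          ((9 : ℝ) ^ (k + 1))⁻¹ * ((9 : ℝ) ^ (l + 1))⁻¹ * (3 ^ (k + 1) * 3 ^ (l + 1)) := by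
          gcongr with a _ b _
          exact hkl _ _
      _ = (∑ k ∈ Finset.range D, ((3 : ℝ) ^ (k + 1))⁻¹) ^ 2 := by
          rw [sq, Finset.sum_mul_sum]
          refine Finset.sum_congr rfl fun a _ => Finset.sum_congr rfl fun b _ => ?_
          have : ∀ n : ℕ, (9 : ℝ) ^ n = 3 ^ n * 3 ^ n := fun n => by rw [← mul_pow]; norm_num
          rw [this, this]
          field_simp
      _ ≤ (1 / 2) ^ 2 := by
          have h0 : 0 ≤ ∑ k ∈ Finset.range D, ((3 : ℝ) ^ (k + 1))⁻¹ :=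
            Finset.sum_nonneg fun k _ => by positivity
          have h3 : (0 : ℝ) ≤ ((3 : ℝ) ^ D)⁻¹ := by positivity
          have := geo D
          gcongr
          linarith
      _ = 1 / 4 := by norm_num
  have hg4 : ∫ x, g x ^ 4 ∂γ ≤ W ^ 2 / 4 := by
    calc ∫ x, g x ^ 4 ∂γ ≤ ∫ x, W ^ 2 * q x ^ 2 ∂γ :=
          integral_mono (hgL.pow 4).integrable ((hqL.pow 2).const_mul _).integrable hg4q
      _ = W ^ 2 * ∫ x, q x ^ 2 ∂γ := integral_const_mul _ _
      _ ≤ W ^ 2 * (1 / 4) := by gcongr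
      _ = _ := by ring
  simp only [Finset.sum_range_succ']
  have hh0 : ∀ x, hermN s 0 x = 1 := fun x => by simp [hermN, hermiteR]
  simp only [hh0, mul_one, pow_zero, one_mul]
  change ∫ x, (g x + c 0) ^ 4 ∂γ ≤ (W + c 0 ^ 2) ^ 2
  calc ∫ x, (g x + c 0) ^ 4 ∂γ
      ≤ ∫ x, (3 * g x ^ 4 + 8 * c 0 ^ 2 * g x ^ 2 + 4 * c 0 ^ 3 * g x + c 0 ^ 4) ∂γ := by
        refine integral_mono ((hgL.add (AllLp.const _)).pow 4).integrable ?_ fun x => ?_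
        · exact (((((hgL.pow 4).const_mul _).add ((hgL.pow 2).const_mul _)).add
            (hgL.const_mul _)).add (AllLp.const _)).integrable
        · have := mul_nonneg (sq_nonneg (g x)) (sq_nonneg (g x - c 0))
          simp only
          nlinarith
    _ = 3 * ∫ x, g x ^ 4 ∂γ + 8 * c 0 ^ 2 * ∫ x, g x ^ 2 ∂γ + c 0 ^ 4 := by
        rw [integral_add, integral_add, integral_add, integral_const_mul, integral_const_mul,
          integral_const_mul, hg1]
        · simp
        · exact ((hgL.pow 4).const_mul _).integrable
        · exact ((hgL.pow 2).const_mul _).integrable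
        · exact (((hgL.pow 4).const_mul _).add ((hgL.pow 2).const_mul _)).integrable
        · exact (hgL.const_mul _).integrable
        · exact ((((hgL.pow 4).const_mul _).add ((hgL.pow 2).const_mul _)).add
            (hgL.const_mul _)).integrable
        · exact integrable_const _
    _ ≤ 3 * (W ^ 2 / 4) + 8 * c 0 ^ 2 * (W / 9) + c 0 ^ 4 := by gcongr
    _ ≤ (W + c 0 ^ 2) ^ 2 := by nlinarith [sq_nonneg W, mul_nonneg (sq_nonneg (c 0)) hW0]

lemma Finset.prod_apply_update {ι κ M : Type*} [Fintype ι] [DecidableEq ι] [CommMonoid M]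
    (F : ι → κ → M) (α : ι → κ) (i : ι) (m : κ) :
    ∏ q, F q (Function.update α i m q) = F i m * ∏ q ∈ Finset.univ.erase i, F q (α q) := by
  rw [← Finset.mul_prod_erase _ _ (Finset.mem_univ i), Function.update_self]
  congr 1
  refine Finset.prod_congr rfl fun q hq => ?_
  rw [Function.update_of_ne (Finset.ne_of_mem_erase hq)]

lemma exists_mul_hermN_eq {s : ℝ} (hs : s ≠ 0) (k : ℕ) :
    ∃ a b : ℝ, ∀ y, y * hermN s k y = a * hermN s (k + 1) y + b * hermN s (k - 1) y := by
  have hf : ∀ j : ℕ, √(j.factorial : ℝ) ≠ 0 := fun j => by positivity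
  cases k with
  | zero =>
    refine ⟨s⁻¹, 0, fun y => ?_⟩
    simp [hermN, hermiteR]
    field_simp
  | succ k =>
    refine ⟨s⁻¹ * √((k + 2).factorial : ℝ) / √((k + 1).factorial : ℝ),
      s⁻¹ * (k + 1) * √(k.factorial : ℝ) / √((k + 1).factorial : ℝ), fun y => ?_⟩
    have h := hermiteR_eval_succ_succ k (s * y)
    simp only [hermN, Nat.add_sub_cancel]
    have h1 := hf k
    have h2 := hf (k + 1)
    have h3 := hf (k + 2)
    have e : (k + 1 + 1).factorial = (k + 2).factorial := rfl
    rw [e]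
    rw [mul_comm s y] at h
    field_simp
    rw [show k + 1 + 1 = k + 2 from rfl]
    linarith

/-- Products of Hermite functions in several variables. -/
noncomputable def hermProd {ι : Type*} [Fintype ι] (s : ℝ) (α : ι → ℕ) (y : ι → ℝ) : ℝ :=
  ∏ q, hermN s (α q) (y q)

/-- The span of the products of Hermite functions of total degree at most `D`. -/
noncomputable def hermSpan (ι : Type*) [Fintype ι] (s : ℝ) (D : ℕ) : Submodule ℝ ((ι → ℝ) → ℝ) :=
  Submodule.span ℝ (hermProd s '' {α | ∑ q, α q ≤ D})

section Span

variable {ι : Type*} [Fintype ι] {s : ℝ} {D : ℕ}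

lemma hermSpan_mono {D' : ℕ} (h : D ≤ D') : hermSpan ι s D ≤ hermSpan ι s D' :=
  Submodule.span_mono (Set.image_mono fun _ hα => le_trans hα h)

lemma coord_mul_mem_hermSpan (hs : s ≠ 0) (i : ι) {f : (ι → ℝ) → ℝ} (hf : f ∈ hermSpan ι s D) :
    (fun y => y i * f y) ∈ hermSpan ι s (D + 1) := by
  classical
  induction hf using Submodule.span_induction with
  | mem f h =>
    obtain ⟨α, hα, rfl⟩ := h
    obtain ⟨a, b, hab⟩ := exists_mul_hermN_eq hs (α i)
    have hsum : ∀ m, ∑ q, Function.update α i m q = m + ∑ q ∈ Finset.univ.erase i, α q :=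
      fun m => by
        have := Finset.prod_apply_update (fun _ k => Multiplicative.ofAdd k) α i m
        exact this
    have hα' : α i + ∑ q ∈ Finset.univ.erase i, α q ≤ D := by
      rw [Finset.add_sum_erase _ _ (Finset.mem_univ i)]; exact hα
    have e : (fun y => y i * hermProd s α y) =
        a • hermProd s (Function.update α i (α i + 1)) +
        b • hermProd s (Function.update α i (α i - 1)) := by
      ext y
      simp only [Pi.add_apply, Pi.smul_apply, smul_eq_mul, hermProd]
      rw [Finset.prod_apply_update (fun q k => hermN s k (y q)),
        Finset.prod_apply_update (fun q k => hermN s k (y q)),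
        ← Finset.mul_prod_erase _ _ (Finset.mem_univ i), ← mul_assoc, hab]
      ring
    rw [e]
    refine Submodule.add_mem _ (Submodule.smul_mem _ _ (Submodule.subset_span ⟨_, ?_, rfl⟩))
      (Submodule.smul_mem _ _ (Submodule.subset_span ⟨_, ?_, rfl⟩)) <;>
    · simp only [Set.mem_ofPred_eq, hsum]
      omega
  | zero => simp only [Pi.zero_apply, mul_zero]; exact Submodule.zero_mem _
  | add f g _ _ hf hg =>
    have : (fun y => y i * (f + g) y) = (fun y => y i * f y) + fun y => y i * g y := by
      ext y; simp [mul_add]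
    rw [this]; exact Submodule.add_mem _ hf hg
  | smul c f _ hf =>
    have : (fun y => y i * (c • f) y) = c • fun y => y i * f y := by
      ext y; simp [mul_left_comm]
    rw [this]; exact Submodule.smul_mem _ _ hf

lemma prod_pow_mem_hermSpan (hs : s ≠ 0) (D : ℕ) (m : ι → ℕ) (hm : ∑ q, m q = D) :
    (fun y : ι → ℝ => ∏ q, y q ^ m q) ∈ hermSpan ι s D := by
  classical
  induction D generalizing m with
  | zero =>
    have h0 : ∀ q, m q = 0 := fun q => by
      simpa using (Finset.sum_eq_zero_iff.1 hm) q (Finset.mem_univ q)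
    refine Submodule.subset_span ⟨0, by simp, ?_⟩
    ext y
    simp [hermProd, hermN, hermiteR, h0]
  | succ D ih =>
    obtain ⟨i, hi⟩ : ∃ i, m i ≠ 0 := by
      by_contra! h
      simp [h] at hm
    have hsum : ∑ q, Function.update m i (m i - 1) q =
        m i - 1 + ∑ q ∈ Finset.univ.erase i, m q := by
      have := Finset.prod_apply_update (fun _ k => Multiplicative.ofAdd k) m i (m i - 1)
      exact this
    have hm' := Finset.add_sum_erase Finset.univ m (Finset.mem_univ i)
    have := coord_mul_mem_hermSpan hs i (ih (Function.update m i (m i - 1)) (by omega))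
    convert! this using 2 with y
    rw [Finset.prod_apply_update (fun q k => y q ^ k),
      ← Finset.mul_prod_erase _ _ (Finset.mem_univ i), ← mul_assoc, ← pow_succ',
      Nat.sub_add_cancel (Nat.pos_of_ne_zero hi)]

lemma eval_mem_hermSpan (hs : s ≠ 0) (p : MvPolynomial ι ℝ) (hp : p.totalDegree ≤ D) :
    (fun y : ι → ℝ => MvPolynomial.eval y p) ∈ hermSpan ι s D := by
  have e : (fun y : ι → ℝ => MvPolynomial.eval y p) =
      ∑ m ∈ p.support, p.coeff m • fun y : ι → ℝ => ∏ q, y q ^ m q := by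
    ext y
    simp [MvPolynomial.eval_eq']
  rw [e]
  refine Submodule.sum_mem _ fun m hm => Submodule.smul_mem _ _ ?_
  refine hermSpan_mono ?_ (prod_pow_mem_hermSpan hs _ m rfl)
  refine le_trans ?_ hp
  have := MvPolynomial.le_totalDegree hm
  rwa [Finsupp.sum_fintype _ _ fun _ => rfl] at this

end Span

/-- Matrices of exponents with total degree at most `D`. -/
def degLE (N n D : ℕ) : Finset (Fin N → Fin n → ℕ) :=
  (Fintype.piFinset fun _ => Fintype.piFinset fun _ => Finset.range (D + 1)).filter
    fun α => ∑ i, ∑ j, α i j ≤ D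

lemma mem_degLE {N n D : ℕ} {α : Fin N → Fin n → ℕ} :
    α ∈ degLE N n D ↔ ∑ i, ∑ j, α i j ≤ D := by
  simp only [degLE, Finset.mem_filter, Fintype.mem_piFinset, Finset.mem_range, and_iff_right_iff_imp]
  intro h i j
  have h1 : α i j ≤ ∑ j, α i j := Finset.single_le_sum (fun _ _ => Nat.zero_le _)
    (Finset.mem_univ j)
  have h2 : ∑ j, α i j ≤ ∑ i, ∑ j, α i j := Finset.single_le_sum
    (f := fun i => ∑ j, α i j) (fun _ _ => Nat.zero_le _) (Finset.mem_univ i)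
  omega

/-- Hermite expansion of a polynomial of degree at most `D` in the entries of a matrix. -/
lemma exists_hermite_expansion {N n D : ℕ} {s : ℝ} (hs : s ≠ 0)
    (p : MvPolynomial (Fin N × Fin n) ℝ) (hp : p.totalDegree ≤ D) :
    ∃ c : (Fin N → Fin n → ℕ) → ℝ, ∀ Y : Fin N → Fin n → ℝ,
      MvPolynomial.eval (fun q => Y q.1 q.2) p =
        ∑ α ∈ degLE N n D, c α * ∏ i, ∏ j, hermN s (α i j) (Y i j) := by
  classical
  have h := eval_mem_hermSpan hs p hp
  let e : (Fin N → Fin n → ℕ) ↪ (Fin N × Fin n → ℕ) := (Equiv.curry _ _ _).symm.toEmbedding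
  have hset : {α : Fin N × Fin n → ℕ | ∑ q, α q ≤ D} = ((degLE N n D).map e : Finset _) := by
    ext α
    simp only [Set.mem_ofPred_eq, Finset.coe_map, Set.mem_image, Finset.mem_coe, mem_degLE]
    constructor
    · intro h
      refine ⟨Function.curry α, ?_, by simp [e]⟩
      rw [Fintype.sum_prod_type] at h
      exact h
    · rintro ⟨β, hβ, rfl⟩
      rw [Fintype.sum_prod_type]
      exact hβ
  rw [hermSpan, hset, Submodule.mem_span_image_finset_iff_exists_fun'] at h
  obtain ⟨c, hc⟩ := h
  refine ⟨fun α => c (e α), fun Y => ?_⟩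
  have := congrFun hc (fun q => Y q.1 q.2)
  rw [← this, Finset.sum_map]
  simp only [Finset.sum_apply, Pi.smul_apply, smul_eq_mul]
  refine Finset.sum_congr rfl fun α _ => ?_
  rw [hermProd, Fintype.prod_prod_type]
  rfl

/-- Stein's identity for polynomials in several variables. -/
lemma IsStein.integral_coord_mul {ι : Type*} [Fintype ι] {γ : Measure ℝ} [IsProbabilityMeasure γ]
    {s : ℝ} (h : IsStein γ s) (l : ι) (P : MvPolynomial ι ℝ) :
    ∫ b, s * b l * MvPolynomial.eval (fun q => s * b q) P ∂(Measure.pi fun _ : ι => γ) =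
      ∫ b, MvPolynomial.eval (fun q => s * b q) (MvPolynomial.pderiv l P)
        ∂(Measure.pi fun _ : ι => γ) := by
  classical
  have hc : ∀ q : ι, AllLp (fun b : ι → ℝ => s * b q) (Measure.pi fun _ : ι => γ) :=
    fun q => h.allLp.pi_eval q
  induction P using MvPolynomial.induction_on' with
  | monomial u a =>
    have e1 : ∀ b : ι → ℝ, s * b l * MvPolynomial.eval (fun q => s * b q)
        (MvPolynomial.monomial u a) =
        a * ∏ q, (if q = l then s * b q * (s * b q) ^ u q else (s * b q) ^ u q) := by
      intro b
      rw [MvPolynomial.eval_monomial, Finsupp.prod_fintype _ _ (by simp),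
        ← Finset.mul_prod_erase _ _ (Finset.mem_univ l),
        ← Finset.mul_prod_erase Finset.univ (fun q => if q = l then _ else _) (Finset.mem_univ l)]
      rw [Finset.prod_congr rfl fun q hq => if_neg (Finset.ne_of_mem_erase hq)]
      simp
      ring
    have e2 : ∀ b : ι → ℝ, MvPolynomial.eval (fun q => s * b q)
        (MvPolynomial.pderiv l (MvPolynomial.monomial u a)) =
        a * ∏ q, (if q = l then u q * (s * b q) ^ (u q - 1) else (s * b q) ^ u q) := by
      intro b
      rw [MvPolynomial.pderiv_monomial, MvPolynomial.eval_monomial,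
        Finsupp.prod_fintype _ _ (by simp), ← Finset.mul_prod_erase _ _ (Finset.mem_univ l),
        ← Finset.mul_prod_erase Finset.univ (fun q => if q = l then _ else _) (Finset.mem_univ l)]
      rw [Finset.prod_congr rfl fun q hq => if_neg (Finset.ne_of_mem_erase hq),
        Finset.prod_congr (g := fun q => (s * b q) ^ u q) rfl fun q hq => by
          simp [(Finset.ne_of_mem_erase hq).symm]]
      simp
      ring
    simp only [e1, e2]
    rw [integral_const_mul, integral_const_mul,
      integral_fintype_prod_eq_prod
        (fun q y => if q = l then s * y * (s * y) ^ u q else (s * y) ^ u q),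
      integral_fintype_prod_eq_prod
        (fun q y => if q = l then u q * (s * y) ^ (u q - 1) else (s * y) ^ u q)]
    congr 1
    refine Finset.prod_congr rfl fun q _ => ?_
    by_cases hq : q = l
    · simpa [hq, Polynomial.derivative_X_pow] using h.stein (Polynomial.X ^ u l)
    · simp [hq]
  | add p q hp hq =>
    have i : ∀ P : MvPolynomial ι ℝ, Integrable (fun b : ι → ℝ =>
        MvPolynomial.eval (fun q => s * b q) P) (Measure.pi fun _ : ι => γ) := fun P =>
      (AllLp.mvPolynomial_eval hc P).integrable
    have i' : ∀ P : MvPolynomial ι ℝ, Integrable (fun b : ι → ℝ =>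
        s * b l * MvPolynomial.eval (fun q => s * b q) P) (Measure.pi fun _ : ι => γ) := fun P =>
      ((hc l).mul (AllLp.mvPolynomial_eval hc P)).integrable
    simp only [map_add, mul_add]
    rw [integral_add (i' p) (i' q), integral_add (i _) (i _), hp, hq]

lemma Derivation.leibniz_finset_prod {R A ι : Type*} [CommSemiring R] [CommRing A] [Algebra R A]
    [DecidableEq ι] (D : Derivation R A A) (T : Finset ι) (f : ι → A) :
    D (∏ i ∈ T, f i) = ∑ i ∈ T, (∏ j ∈ T.erase i, f j) * D (f i) := by
  induction T using Finset.induction_on with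
  | empty => simp
  | insert a T ha ih =>
    rw [Finset.prod_insert ha, Finset.sum_insert ha, Finset.erase_insert ha, Derivation.leibniz, ih]
    simp only [smul_eq_mul]
    rw [add_comm]
    congr 1
    · rw [Finset.mul_sum]
      refine Finset.sum_congr rfl fun i hi => ?_
      have hia : a ≠ i := fun h => ha (h ▸ hi)
      rw [Finset.erase_insert_of_ne hia, Finset.prod_insert (fun h => ha (Finset.mem_of_mem_erase h)),
        mul_assoc]

lemma derivative_hermiteR_eq (k : ℕ) :
    Polynomial.derivative (hermiteR k) = (k : Polynomial ℝ) * hermiteR (k - 1) := by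
  cases k with
  | zero => simp [hermiteR]
  | succ k => rw [derivative_hermiteR]; simp

lemma hermiteR_eval_succ (k : ℕ) (x : ℝ) : (hermiteR (k + 1)).eval x =
    x * (hermiteR k).eval x - k * (hermiteR (k - 1)).eval x := by
  rw [hermiteR_succ, derivative_hermiteR_eq]
  simp

/-- The affine form `s x u_j + ∑_l A_{lj} X_l`. -/
noncomputable def rowForm {ι κ : Type*} [Fintype κ] (s x : ℝ) (u : ι → ℝ) (A : κ → ι → ℝ) (j : ι) : MvPolynomial κ ℝ :=
  MvPolynomial.C (s * x * u j) + ∑ l, MvPolynomial.C (A l j) * MvPolynomial.X l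

lemma pderiv_rowForm {ι κ : Type*} [Fintype κ] [DecidableEq κ] (s x : ℝ) (u : ι → ℝ) (A : κ → ι → ℝ) (l : κ) (j : ι) :
    MvPolynomial.pderiv l (rowForm s x u A j) = MvPolynomial.C (A l j) := by
  simp [rowForm, MvPolynomial.pderiv_X, Pi.single_apply]

section Row

variable {ι κ : Type*} [Fintype ι] [DecidableEq ι] [Fintype κ]

/-- The product of Hermite polynomials of the forms `rowForm`. -/
noncomputable def rowHerm (s x : ℝ) (u : ι → ℝ) (A : κ → ι → ℝ) (β : ι → ℕ) : MvPolynomial κ ℝ :=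
  ∏ j, Polynomial.aeval (rowForm s x u A j) (hermiteR (β j))

lemma pderiv_rowHerm (s x : ℝ) (u : ι → ℝ) (A : κ → ι → ℝ) (l : κ) (β : ι → ℕ) :
    MvPolynomial.pderiv l (rowHerm s x u A β) =
      ∑ m, MvPolynomial.C (β m * A l m) * rowHerm s x u A (Function.update β m (β m - 1)) := by
  classical
  rw [rowHerm, Derivation.leibniz_finset_prod]
  refine Finset.sum_congr rfl fun m _ => ?_
  rw [Derivation.map_aeval, pderiv_rowForm, derivative_hermiteR_eq, rowHerm,
    Finset.prod_apply_update (fun j k => Polynomial.aeval (rowForm s x u A j) (hermiteR k))]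
  simp only [map_mul, map_natCast, smul_eq_mul]
  ring

lemma rowHerm_update_succ (s x : ℝ) (u : ι → ℝ) (A : κ → ι → ℝ) (j : ι) (β : ι → ℕ) :
    rowHerm s x u A (Function.update β j (β j + 1)) =
      rowForm s x u A j * rowHerm s x u A β -
        MvPolynomial.C (β j : ℝ) * rowHerm s x u A (Function.update β j (β j - 1)) := by
  simp only [rowHerm]
  rw [Finset.prod_apply_update (fun j k => Polynomial.aeval (rowForm s x u A j) (hermiteR k)),
    Finset.prod_apply_update (fun j k => Polynomial.aeval (rowForm s x u A j) (hermiteR k)),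
    ← Finset.mul_prod_erase Finset.univ
      (fun j => Polynomial.aeval (rowForm s x u A j) (hermiteR (β j))) (Finset.mem_univ j),
    hermiteR_succ, derivative_hermiteR_eq]
  simp only [map_sub, map_mul, map_natCast, Polynomial.aeval_X]
  ring

lemma prod_pow_update_pred {u : ι → ℝ} (β : ι → ℕ) (m : ι) (hm : β m ≠ 0) :
    u m * ∏ j, u j ^ Function.update β m (β m - 1) j = ∏ j, u j ^ β j := by
  rw [Finset.prod_apply_update (fun j k => u j ^ k), ← mul_assoc, ← pow_succ',
    Nat.sub_add_cancel (Nat.pos_of_ne_zero hm),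
    Finset.mul_prod_erase Finset.univ (fun j => u j ^ β j) (Finset.mem_univ m)]

lemma sum_update_eq (β : ι → ℕ) (m : ι) (k : ℕ) :
    ∑ j, Function.update β m k j + β m = k + ∑ j, β j := by
  have h1 : ∑ j, Function.update β m k j = k + ∑ q ∈ Finset.univ.erase m, β q :=
    Finset.prod_apply_update (fun _ k => Multiplicative.ofAdd k) β m k
  have h2 := Finset.add_sum_erase Finset.univ β (Finset.mem_univ m)
  omega

lemma IsStein.integral_rowHerm {γ : Measure ℝ} [IsProbabilityMeasure γ] {s : ℝ} (h : IsStein γ s)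
    (x : ℝ) {u : ι → ℝ} {A : κ → ι → ℝ}
    (hA : ∀ j m, ∑ l, A l j * A l m = (if j = m then 1 else 0) - u j * u m) (β : ι → ℕ) :
    ∫ b, MvPolynomial.eval (fun q => s * b q) (rowHerm s x u A β) ∂(Measure.pi fun _ : κ => γ) =
      (∏ j, u j ^ β j) * (hermiteR (∑ j, β j)).eval (s * x) := by
  classical
  have hc : ∀ q : κ, AllLp (fun b : κ → ℝ => s * b q) (Measure.pi fun _ : κ => γ) :=
    fun q => h.allLp.pi_eval q
  have hi : ∀ P : MvPolynomial κ ℝ, Integrable (fun b : κ → ℝ =>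
      MvPolynomial.eval (fun q => s * b q) P) (Measure.pi fun _ : κ => γ) := fun P =>
    (AllLp.mvPolynomial_eval hc P).integrable
  have hi' : ∀ (l : κ) (P : MvPolynomial κ ℝ), Integrable (fun b : κ → ℝ =>
      s * b l * MvPolynomial.eval (fun q => s * b q) P) (Measure.pi fun _ : κ => γ) := fun l P =>
    ((hc l).mul (AllLp.mvPolynomial_eval hc P)).integrable
  suffices ∀ K : ℕ, ∀ β : ι → ℕ, ∑ j, β j = K →
      ∫ b, MvPolynomial.eval (fun q => s * b q) (rowHerm s x u A β)
        ∂(Measure.pi fun _ : κ => γ) = (∏ j, u j ^ β j) * (hermiteR K).eval (s * x) from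
    this _ β rfl
  intro K
  induction K using Nat.strong_induction_on with
  | _ K ih =>
  intro β hβ
  cases K with
  | zero =>
    have h0 : ∀ q, β q = 0 := fun q => by
      simpa using (Finset.sum_eq_zero_iff.1 hβ) q (Finset.mem_univ q)
    simp [rowHerm, h0, hermiteR]
  | succ K =>
  obtain ⟨j, hj⟩ : ∃ i, β i ≠ 0 := by
    by_contra! h
    simp [h] at hβ
  obtain ⟨α, rfl⟩ : ∃ α : ι → ℕ, β = Function.update α j (α j + 1) :=
    ⟨Function.update β j (β j - 1), by
      ext i
      by_cases hij : i = j
      · subst hij; simp; omega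
      · simp [hij]⟩
  have hα : ∑ j, α j = K := by
    have := sum_update_eq α j (α j + 1)
    omega
  set E : MvPolynomial κ ℝ → ℝ := fun P =>
    ∫ b, MvPolynomial.eval (fun q => s * b q) P ∂(Measure.pi fun _ : κ => γ) with hE
  have e1 : E (rowHerm s x u A (Function.update α j (α j + 1))) =
      s * x * u j * E (rowHerm s x u A α) +
        ∑ l, A l j * E (MvPolynomial.pderiv l (rowHerm s x u A α)) -
        α j * E (rowHerm s x u A (Function.update α j (α j - 1))) := by
    simp only [hE]
    rw [rowHerm_update_succ]
    simp only [rowForm, map_sub, map_mul, map_add, map_sum, MvPolynomial.eval_C,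
      MvPolynomial.eval_X, add_mul, Finset.sum_mul]
    simp only [mul_assoc (A _ _)]
    rw [integral_sub, integral_add, integral_finsetSum, integral_const_mul, integral_const_mul]
    · congr 2
      refine Finset.sum_congr rfl fun l _ => ?_
      rw [integral_const_mul, h.integral_coord_mul l]
    · exact fun l _ => (hi' l _).const_mul _
    · exact (hi _).const_mul _
    · exact integrable_finsetSum _ fun l _ => (hi' l _).const_mul _
    · exact ((hi _).const_mul _).add (integrable_finsetSum _ fun l _ => (hi' l _).const_mul _)
    · exact (hi _).const_mul _
  have e2 : ∀ l, E (MvPolynomial.pderiv l (rowHerm s x u A α)) =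
      ∑ m, α m * A l m * E (rowHerm s x u A (Function.update α m (α m - 1))) := by
    intro l
    simp only [hE]
    rw [pderiv_rowHerm]
    simp only [map_sum, map_mul (MvPolynomial.eval _), MvPolynomial.eval_C]
    rw [integral_finsetSum _ fun m _ => (hi _).const_mul _]
    refine Finset.sum_congr rfl fun m _ => ?_
    rw [integral_const_mul]
  have e3 : ∀ m, u m * (α m * E (rowHerm s x u A (Function.update α m (α m - 1)))) =
      α m * ((∏ j, u j ^ α j) * (hermiteR (K - 1)).eval (s * x)) := by
    intro m
    by_cases hm : α m = 0
    · simp [hm]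
    · have hs := sum_update_eq α m (α m - 1)
      have hle : α m ≤ K := hα ▸ Finset.single_le_sum (fun _ _ => Nat.zero_le _) (Finset.mem_univ m)
      have := ih (K - 1) (by omega) (Function.update α m (α m - 1)) (by omega)
      simp only [hE]
      rw [this, ← prod_pow_update_pred α m hm]
      ring
  have e4 : ∑ l, A l j * E (MvPolynomial.pderiv l (rowHerm s x u A α)) =
      α j * E (rowHerm s x u A (Function.update α j (α j - 1))) -
        u j * (K * ((∏ j, u j ^ α j) * (hermiteR (K - 1)).eval (s * x))) := by
    simp only [e2, Finset.mul_sum]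
    rw [Finset.sum_comm]
    have : ∀ m, ∑ l, A l j * (α m * A l m * E (rowHerm s x u A (Function.update α m (α m - 1)))) =
        (if j = m then α m * E (rowHerm s x u A (Function.update α m (α m - 1))) else 0) -
        u j * (α m * ((∏ j, u j ^ α j) * (hermiteR (K - 1)).eval (s * x))) := by
      intro m
      rw [← e3]
      have : ∀ l, A l j * (α m * A l m * E (rowHerm s x u A (Function.update α m (α m - 1)))) =
          (A l j * A l m) * (α m * E (rowHerm s x u A (Function.update α m (α m - 1)))) := by
        intro l; ring
      simp only [this]
      rw [← Finset.sum_mul, hA]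
      split_ifs <;> ring
    simp only [this]
    rw [Finset.sum_sub_distrib, Finset.sum_ite_eq, if_pos (Finset.mem_univ _), ← Finset.mul_sum,
      ← Finset.sum_mul, ← Nat.cast_sum, hα]
  have e5 : E (rowHerm s x u A α) = (∏ j, u j ^ α j) * (hermiteR K).eval (s * x) :=
    ih K (by omega) α hα
  change E _ = _
  rw [e1, e4, e5, hermiteR_eval_succ, Finset.prod_apply_update (fun j k => u j ^ k),
    ← Finset.mul_prod_erase Finset.univ (fun j => u j ^ α j) (Finset.mem_univ j)]
  ring

/-- Averaging Hermite polynomials of a row over its Gaussian part. -/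
lemma IsStein.integral_prod_hermiteR_row {γ : Measure ℝ} [IsProbabilityMeasure γ] {s : ℝ}
    (h : IsStein γ s) (x : ℝ) {u : ι → ℝ} {A : κ → ι → ℝ}
    (hA : ∀ j m, ∑ l, A l j * A l m = (if j = m then 1 else 0) - u j * u m) (β : ι → ℕ) :
    ∫ b, ∏ j, (hermiteR (β j)).eval (s * (x * u j + ∑ l, b l * A l j))
        ∂(Measure.pi fun _ : κ => γ) =
      (∏ j, u j ^ β j) * (hermiteR (∑ j, β j)).eval (s * x) := by
  rw [← h.integral_rowHerm x hA β]
  congr 1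
  ext b
  rw [rowHerm, map_prod]
  refine Finset.prod_congr rfl fun j _ => ?_
  rw [← MvPolynomial.coe_aeval_eq_eval, RingHom.coe_coe, ← Polynomial.aeval_algHom_apply,
    Polynomial.coe_aeval_eq_eval]
  congr 1
  simp only [rowForm, map_add, map_sum, map_mul, MvPolynomial.aeval_C, MvPolynomial.aeval_X,
    Algebra.algebraMap_self, RingHom.id_apply, mul_add, Finset.mul_sum]
  congr 1
  · ring
  · exact Finset.sum_congr rfl fun l _ => by ring

end Row

lemma isProbabilityMeasure_brMeasure (N : ℕ) {ρ : ℝ} (h0 : 0 ≤ ρ) (h1 : ρ ≤ 1) :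
    IsProbabilityMeasure (brMeasure N ρ) := by
  constructor
  simp only [brMeasure, Measure.add_apply, Measure.smul_apply, measure_univ]
  simp only [ENNReal.smul_def, smul_eq_mul, mul_one]
  rw [← ENNReal.coe_add, ← ENNReal.coe_add, ← Real.toNNReal_add (by linarith) (by linarith),
    ← Real.toNNReal_add (by linarith) (by linarith), show 1 - ρ + ρ / 2 + ρ / 2 = 1 by ring]
  simp

lemma integral_brMeasure (N : ℕ) {ρ : ℝ} (h0 : 0 ≤ ρ) (h1 : ρ ≤ 1) (f : ℝ → ℝ) :
    ∫ x, f x ∂(brMeasure N ρ) = (1 - ρ) * f 0 + ρ / 2 * f (√(N * ρ))⁻¹ +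
      ρ / 2 * f (-(√(N * ρ))⁻¹) := by
  have hi : ∀ (c : NNReal) (a : ℝ), Integrable f (c • Measure.dirac a) := fun c a =>
    (integrable_dirac (by simp)).smul_measure_nnreal
  rw [brMeasure, integral_add_measure ((hi _ _).add_measure (hi _ _)) (hi _ _),
    integral_add_measure (hi _ _) (hi _ _), integral_smul_nnreal_measure,
    integral_smul_nnreal_measure, integral_smul_nnreal_measure]
  simp only [integral_dirac, NNReal.smul_def, smul_eq_mul]
  rw [Real.coe_toNNReal _ (by linarith), Real.coe_toNNReal _ (by linarith)]

lemma allLp_id_brMeasure (N : ℕ) (ρ : ℝ) : AllLp (fun x : ℝ => x) (brMeasure N ρ) := by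
  refine AllLp.of_bound aestronglyMeasurable_id ((√(N * ρ))⁻¹) ?_
  have hs : MeasurableSet {x : ℝ | ‖x‖ ≤ (√(N * ρ))⁻¹} :=
    measurableSet_le measurable_norm measurable_const
  have hd : ∀ (c : NNReal) (a : ℝ), |a| ≤ (√(N * ρ))⁻¹ →
      ∀ᵐ x ∂(c • Measure.dirac a : Measure ℝ), ‖x‖ ≤ (√(N * ρ))⁻¹ := fun c a h =>
    Measure.ae_smul_measure ((ae_dirac_iff hs).2 h) c
  rw [brMeasure, ae_add_measure_iff, ae_add_measure_iff]
  have h0 : 0 ≤ (√(N * ρ))⁻¹ := by positivity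
  exact ⟨⟨hd _ _ (by rwa [abs_zero]), hd _ _ (by rw [abs_of_nonneg h0])⟩,
    hd _ _ (by rw [abs_neg, abs_of_nonneg h0])⟩

/-- Conditionally on `v` and `Q`, the mean of a product of Hermite functions of the entries
of the planted matrix. -/
lemma integral_hermN_gaussBasis {N n : ℕ} {σ2 : NNReal} {s : ℝ}
    (h : IsStein (gaussianReal 0 σ2) s) (j₀ : Fin n) (hj₀ : (j₀ : ℕ) = 0) (v : Fin N → ℝ)
    (Q : Fin n → Fin n → ℝ)
    (hQ : (Matrix.of Q)ᵀ * Matrix.of Q = 1) (α : Fin N → Fin n → ℕ) :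
    ∫ B, ∏ i, ∏ j, hermN s (α i j) ((gaussBasis v B * Matrix.of Q) i j)
        ∂(iidGaussVec N (n - 1) σ2) =
      (∏ i, ∏ j, Q j₀ j ^ α i j / √((α i j).factorial : ℝ)) *
        ∏ i, (hermiteR (∑ j, α i j)).eval (s * v i) := by
  cases n with
  | zero => exact j₀.elim0
  | succ n =>
  obtain rfl : j₀ = 0 := Fin.ext hj₀
  have hA : ∀ j m, ∑ l : Fin n, Q l.succ j * Q l.succ m = (if j = m then 1 else 0) - Q 0 j * Q 0 m := by
    intro j m
    have := congrFun (congrFun hQ j) m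
    rw [Matrix.mul_apply, Fin.sum_univ_succ, Matrix.one_apply] at this
    simp only [transpose_apply, of_apply] at this
    linarith
  have e : ∀ (B : Fin N → Fin n → ℝ) (i : Fin N) (j : Fin (n + 1)),
      (gaussBasis (n := n + 1) v B * Matrix.of Q) i j = v i * Q 0 j + ∑ l, B i l * Q l.succ j := by
    intro B i j
    rw [Matrix.mul_apply, Fin.sum_univ_succ]
    rfl
  rw [← Finset.prod_mul_distrib]
  have := integral_fintype_prod_eq_prod (fun (i : Fin N) (b : Fin n → ℝ) =>
    ∏ j, hermN s (α i j) (v i * Q 0 j + ∑ l, b l * Q l.succ j))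
    (μ := fun _ => gaussVec n σ2)
  simp only [e]
  rw [iidGaussVec]
  refine this.trans (Finset.prod_congr rfl fun i _ => ?_)
  have hr := h.integral_prod_hermiteR_row (v i) (u := fun j => Q 0 j)
    (A := fun (l : Fin n) j => Q l.succ j) hA (α i)
  simp only [hermN, Finset.prod_div_distrib]
  rw [integral_div, gaussVec, hr]
  ring

lemma ae_abs_le_one_of_orthogonal {n : ℕ} {μQ : Measure (Fin n → Fin n → ℝ)}
    (hQ : ∀ᵐ Q ∂μQ, (Matrix.of Q)ᵀ * Matrix.of Q = 1)
    (i j : Fin n) : ∀ᵐ Q ∂μQ, |Q i j| ≤ 1 := by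
  filter_upwards [hQ] with Q h
  have h1 := congrFun (congrFun h j) j
  rw [Matrix.mul_apply, Matrix.one_apply_eq] at h1
  simp only [transpose_apply, of_apply] at h1
  rw [abs_le_one_iff_mul_self_le_one, ← h1]
  exact Finset.single_le_sum (f := fun k => Q k j * Q k j) (fun k _ => mul_self_nonneg _)
    (Finset.mem_univ i)

section Planted

variable {N n : ℕ} {ρ : ℝ} {μQ : Measure (Fin n → Fin n → ℝ)} [IsProbabilityMeasure μQ]
  {σ2 : NNReal} {s : ℝ}

lemma allLp_orthogonal_entry (hQ : ∀ᵐ Q ∂μQ, (Matrix.of Q)ᵀ * Matrix.of Q = 1) (i j : Fin n) :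
    AllLp (fun Q => Q i j) μQ := by
  have hm : Measurable fun Q : Fin n → Fin n → ℝ => Q i j :=
    (measurable_pi_apply j).comp (measurable_pi_apply i)
  exact AllLp.of_bound hm.aestronglyMeasurable 1 (ae_abs_le_one_of_orthogonal hQ i j)

lemma allLp_planted_entry (h0 : 0 ≤ ρ) (h1 : ρ ≤ 1)
    (hQ : ∀ᵐ Q ∂μQ, (Matrix.of Q)ᵀ * Matrix.of Q = 1) (i : Fin N) (j : Fin n) :
    AllLp (fun w : (Fin N → ℝ) × (Fin n → Fin n → ℝ) × (Fin N → Fin (n - 1) → ℝ) =>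
      (gaussBasis w.1 w.2.2 * Matrix.of w.2.1) i j)
      ((brVec N ρ).prod (μQ.prod (iidGaussVec N (n - 1) σ2))) := by
  have := isProbabilityMeasure_brMeasure N h0 h1
  have : IsProbabilityMeasure (brVec N ρ) := by unfold brVec; infer_instance
  have : IsProbabilityMeasure (iidGaussVec N (n - 1) σ2) := by unfold iidGaussVec; infer_instance
  have hV : ∀ i : Fin N, AllLp (fun v : Fin N → ℝ => v i) (brVec N ρ) := fun i =>
    (allLp_id_brMeasure N ρ).pi_eval i
  have hG : AllLp (fun x : ℝ => x) (gaussianReal 0 σ2) := fun p => memLp_id_gaussianReal p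
  have hB : ∀ (i : Fin N) (l : Fin (n - 1)), AllLp (fun B : Fin N → Fin (n - 1) → ℝ => B i l)
      (iidGaussVec N (n - 1) σ2) := fun i l => (hG.pi_eval l).pi_eval i
  simp only [Matrix.mul_apply, gaussBasis, of_apply, rowCat]
  refine AllLp.sum _ fun k _ => AllLp.mul ?_
    (((allLp_orthogonal_entry hQ k j).comp_mp measurePreserving_fst).comp_mp measurePreserving_snd)
  by_cases hk : (k : ℕ) = 0
  · simp only [hk, dif_pos]
    exact (hV i).comp_mp measurePreserving_fst
  · simp only [hk, dif_neg, not_false_eq_true]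
    exact ((hB i _).comp_mp measurePreserving_snd).comp_mp measurePreserving_snd

/-- Hermite coefficients of the planted law. -/
lemma integral_hermN_planted (h : IsStein (gaussianReal 0 σ2) s) (h0 : 0 ≤ ρ) (h1 : ρ ≤ 1)
    (hQ : ∀ᵐ Q ∂μQ, (Matrix.of Q)ᵀ * Matrix.of Q = 1) (j₀ : Fin n) (hj₀ : (j₀ : ℕ) = 0)
    (α : Fin N → Fin n → ℕ) :
    ∫ w : (Fin N → ℝ) × (Fin n → Fin n → ℝ) × (Fin N → Fin (n - 1) → ℝ),
        ∏ i, ∏ j, hermN s (α i j) ((gaussBasis w.1 w.2.2 * Matrix.of w.2.1) i j)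
        ∂((brVec N ρ).prod (μQ.prod (iidGaussVec N (n - 1) σ2))) =
      (∫ Q, ∏ i, ∏ j, Q j₀ j ^ α i j / √((α i j).factorial : ℝ) ∂μQ) *
        ∏ i, ∫ x, (hermiteR (∑ j, α i j)).eval (s * x) ∂(brMeasure N ρ) := by
  have := isProbabilityMeasure_brMeasure N h0 h1
  have : IsProbabilityMeasure (brVec N ρ) := by unfold brVec; infer_instance
  have : IsProbabilityMeasure (iidGaussVec N (n - 1) σ2) := by unfold iidGaussVec; infer_instance
  have hI : Integrable (fun w : (Fin N → ℝ) × (Fin n → Fin n → ℝ) × (Fin N → Fin (n - 1) → ℝ) =>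
      ∏ i, ∏ j, hermN s (α i j) ((gaussBasis w.1 w.2.2 * Matrix.of w.2.1) i j))
      ((brVec N ρ).prod (μQ.prod (iidGaussVec N (n - 1) σ2))) := by
    refine (AllLp.prod _ fun i _ => AllLp.prod _ fun j _ => ?_).integrable
    simp only [hermN, div_eq_mul_inv]
    exact (((allLp_planted_entry h0 h1 hQ i j).const_mul s).polynomial_eval _).mul (AllLp.const _)
  rw [integral_prod _ hI]
  have hin : ∀ᵐ v ∂(brVec N ρ), ∫ w : (Fin n → Fin n → ℝ) × (Fin N → Fin (n - 1) → ℝ),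
        ∏ i, ∏ j, hermN s (α i j) ((gaussBasis v w.2 * Matrix.of w.1) i j)
        ∂(μQ.prod (iidGaussVec N (n - 1) σ2)) =
      (∫ Q, ∏ i, ∏ j, Q j₀ j ^ α i j / √((α i j).factorial : ℝ) ∂μQ) *
        ∏ i, (hermiteR (∑ j, α i j)).eval (s * v i) := by
    filter_upwards [hI.prod_right_ae] with v hv
    rw [integral_prod _ hv, ← integral_mul_const]
    refine integral_congr_ae ?_
    filter_upwards [hQ] with Q hq
    exact integral_hermN_gaussBasis h j₀ hj₀ v Q hq α
  rw [integral_congr_ae hin, integral_const_mul, brVec]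
  congr 1
  exact integral_fintype_prod_eq_prod
    (fun (i : Fin N) x => (hermiteR (∑ j, α i j)).eval (s * x)) (μ := fun _ => brMeasure N ρ)

end Planted

lemma exists_orthogonal_row {n : ℕ} (j₀ : Fin n) (a : Fin n → ℝ) (ha : ∑ j, a j ^ 2 = 1) :
    ∃ R : Matrix (Fin n) (Fin n) ℝ, Rᵀ * R = 1 ∧ R j₀ = a := by
  let v : Fin n → EuclideanSpace ℝ (Fin n) := fun _ => WithLp.toLp 2 a
  have hv : Orthonormal ℝ (({j₀} : Set (Fin n)).domRestrict v) := by
    constructor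
    · intro i
      rw [Set.domRestrict_apply, EuclideanSpace.norm_eq]
      simp [v, ha]
    · intro i j hij
      exact absurd (Subsingleton.elim i j) hij
  obtain ⟨b, hb⟩ := hv.exists_orthonormalBasis_extension_of_card_eq (by simp)
  refine ⟨Matrix.of fun i k => b i k, ?_, ?_⟩
  · rw [mul_eq_one_comm]
    ext i j
    have h := (orthonormal_iff_ite.1 b.orthonormal) i j
    rw [PiLp.inner_apply] at h
    rw [Matrix.mul_apply, Matrix.one_apply, ← h]
    refine Finset.sum_congr rfl fun k _ => ?_
    simp [mul_comm]
  · ext k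
    have := hb j₀ rfl
    simp [this, v]

/-- The vectors of signs, as a finite set. -/
noncomputable def signVec (n : ℕ) : Finset (Fin n → ℝ) :=
  Fintype.piFinset fun _ => ({1, -1} : Finset ℝ)

lemma card_signVec (n : ℕ) : (signVec n).card = 2 ^ n := by
  rw [signVec, Fintype.card_piFinset_const, Finset.card_pair (by norm_num)]

lemma sq_of_mem_signVec {n : ℕ} {g : Fin n → ℝ} (hg : g ∈ signVec n) (k : Fin n) :
    g k ^ 2 = 1 := by
  have := Fintype.mem_piFinset.1 hg k
  simp only [Finset.mem_insert, Finset.mem_singleton] at this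
  rcases this with h | h <;> rw [h] <;> norm_num

lemma sum_signVec_exp_le {n : ℕ} (y : Fin n → ℝ) (hy : ∑ k, y k ^ 2 = 1) :
    ∑ g ∈ signVec n, Real.exp (∑ k, g k * y k) ≤ 2 ^ n * Real.exp (1 / 2) := by
  have e : ∑ g ∈ signVec n, Real.exp (∑ k, g k * y k) = ∏ k, (2 * Real.cosh (y k)) := by
    simp only [Real.exp_sum]
    rw [signVec, ← Finset.prod_univ_sum (fun _ => ({1, -1} : Finset ℝ))
      (fun k ε => Real.exp (ε * y k))]
    refine Finset.prod_congr rfl fun k _ => ?_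
    rw [Finset.sum_pair (by norm_num), Real.cosh_eq]
    simp
    ring
  rw [e, Finset.prod_mul_distrib, Finset.prod_const, Finset.card_univ, Fintype.card_fin]
  gcongr
  calc ∏ k, Real.cosh (y k) ≤ ∏ k, Real.exp (y k ^ 2 / 2) :=
        Finset.prod_le_prod (fun k _ => (Real.cosh_pos _).le)
          fun k _ => Real.cosh_le_exp_half_sq _
    _ = Real.exp (1 / 2) := by rw [← Real.exp_sum, ← Finset.sum_div, hy]

lemma even_pow_le_factorial_mul_exp {p : ℕ} (hp : Even p) (y : ℝ) :
    y ^ p ≤ p.factorial * (Real.exp y + Real.exp (-y)) := by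
  have h := Real.pow_div_factorial_le_exp |y| (abs_nonneg y) p
  rw [div_le_iff₀ (by positivity), hp.pow_abs] at h
  have : Real.exp |y| ≤ Real.exp y + Real.exp (-y) := by
    rcases abs_choice y with h | h <;> rw [h]
    · linarith [Real.exp_pos (-y)]
    · linarith [Real.exp_pos y]
  calc y ^ p ≤ Real.exp |y| * p.factorial := h
    _ ≤ _ := by rw [mul_comm]; gcongr

lemma sum_signVec_pow_le {n p : ℕ} (hp : Even p) (y : Fin n → ℝ) (hy : ∑ k, y k ^ 2 = 1) :
    ∑ g ∈ signVec n, (∑ k, g k * y k) ^ p ≤ 2 ^ n * (4 * (p : ℝ) ^ p) := by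
  have h1 := sum_signVec_exp_le y hy
  have h2 := sum_signVec_exp_le (fun k => -y k) (by simpa using hy)
  simp only [mul_neg, Finset.sum_neg_distrib] at h2
  have he : Real.exp (1 / 2) ≤ 2 := by
    have h3 : Real.exp (1 / 2) ^ 2 = Real.exp 1 := by rw [← Real.exp_nat_mul]; norm_num
    nlinarith [Real.exp_one_lt_d9, Real.exp_pos (1 / 2)]
  have hf : (p.factorial : ℝ) ≤ (p : ℝ) ^ p := by exact_mod_cast Nat.factorial_le_pow p
  calc ∑ g ∈ signVec n, (∑ k, g k * y k) ^ p
      ≤ ∑ g ∈ signVec n, p.factorial *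
          (Real.exp (∑ k, g k * y k) + Real.exp (-∑ k, g k * y k)) :=
        Finset.sum_le_sum fun g _ => even_pow_le_factorial_mul_exp hp _
    _ = p.factorial * (∑ g ∈ signVec n, Real.exp (∑ k, g k * y k) +
          ∑ g ∈ signVec n, Real.exp (-∑ k, g k * y k)) := by
        rw [← Finset.mul_sum, Finset.sum_add_distrib]
    _ ≤ (p : ℝ) ^ p * (2 ^ n * Real.exp (1 / 2) + 2 ^ n * Real.exp (1 / 2)) := by gcongr
    _ ≤ (p : ℝ) ^ p * (2 ^ n * 2 + 2 ^ n * 2) := by gcongr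
    _ = _ := by ring

section Sphere

variable {n : ℕ} {μQ : Measure (Fin n → Fin n → ℝ)} [IsProbabilityMeasure μQ]

/-- Even moments of a fixed one-dimensional projection of a row of a left-invariant random
orthogonal matrix. -/
lemma integral_row_pow_le (hQ : ∀ᵐ Q ∂μQ, (Matrix.of Q)ᵀ * Matrix.of Q = 1)
    (hinv : ∀ R : Matrix (Fin n) (Fin n) ℝ, Rᵀ * R = 1 →
      Measure.map (fun Q => fun i j => (R * Matrix.of Q) i j) μQ = μQ)
    (j₀ : Fin n) {p : ℕ} (hp : Even p) (w : Fin n → ℝ) (hw : ∑ j, w j ^ 2 = 1) :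
    ∫ Q, (∑ j, Q j₀ j * w j) ^ p ∂μQ ≤ 4 * (p / √n) ^ p := by
  have hn : (0 : ℝ) < n := by exact_mod_cast j₀.pos
  have hsn : (√n : ℝ) ^ 2 = n := Real.sq_sqrt hn.le
  have hsp : (0 : ℝ) < √n := Real.sqrt_pos.2 hn
  have hm : ∀ i j : Fin n, Measurable fun Q : Fin n → Fin n → ℝ => Q i j := fun i j =>
    (measurable_pi_apply j).comp (measurable_pi_apply i)
  have hL : ∀ a : Fin n → ℝ, AllLp (fun Q => (∑ k, a k * ∑ j, Q k j * w j) ^ p) μQ := fun a =>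
    (AllLp.sum _ fun k _ => (AllLp.sum _ fun j _ =>
      (allLp_orthogonal_entry hQ k j).mul (AllLp.const _)).const_mul _).pow p
  have key : ∀ g ∈ signVec n, ∫ Q, (∑ j, Q j₀ j * w j) ^ p ∂μQ =
      (∫ Q, (∑ k, g k * ∑ j, Q k j * w j) ^ p ∂μQ) / √n ^ p := by
    intro g hg
    obtain ⟨R, hR, hR0⟩ := exists_orthogonal_row j₀ (fun k => g k / √n) (by
      simp only [div_pow, sq_of_mem_signVec hg, hsn]
      simp [hn.ne'])
    have hmR : Measurable fun Q : Fin n → Fin n → ℝ => fun i j => (R * Matrix.of Q) i j := by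
      refine measurable_pi_iff.2 fun i => measurable_pi_iff.2 fun j => ?_
      simp only [Matrix.mul_apply, of_apply]
      exact Finset.measurable_sum _ fun k _ => (hm k j).const_mul _
    conv_lhs => rw [← hinv R hR]
    rw [integral_map hmR.aemeasurable, ← integral_div]
    · congr 1
      ext Q
      rw [← div_pow]
      congr 1
      simp only [Matrix.mul_apply, of_apply, hR0, Finset.sum_mul, Finset.sum_div, Finset.mul_sum]
      rw [Finset.sum_comm]
      exact Finset.sum_congr rfl fun k _ => Finset.sum_congr rfl fun j _ => by ring
    · exact ((Finset.measurable_sum _ fun j _ => (hm j₀ j).mul_const _).pow_const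
        p).aestronglyMeasurable
  have h2 : (2 : ℝ) ^ n * ∫ Q, (∑ j, Q j₀ j * w j) ^ p ∂μQ =
      (∫ Q, ∑ g ∈ signVec n, (∑ k, g k * ∑ j, Q k j * w j) ^ p ∂μQ) / √n ^ p := by
    rw [integral_finsetSum _ fun g _ => (hL g).integrable, Finset.sum_div,
      ← Finset.sum_congr rfl key, Finset.sum_const, card_signVec]
    simp
  have h3 : ∫ Q, ∑ g ∈ signVec n, (∑ k, g k * ∑ j, Q k j * w j) ^ p ∂μQ ≤
      2 ^ n * (4 * (p : ℝ) ^ p) := by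
    have : ∫ _Q : Fin n → Fin n → ℝ, (2 ^ n * (4 * (p : ℝ) ^ p)) ∂μQ = 2 ^ n * (4 * (p : ℝ) ^ p) := by
      simp
    rw [← this]
    refine integral_mono_ae (AllLp.sum _ fun g _ => hL g).integrable (integrable_const _) ?_
    filter_upwards [hQ] with Q hq
    refine sum_signVec_pow_le hp _ ?_
    have e1 : (fun k => ∑ j, Q k j * w j) = Matrix.of Q *ᵥ w := rfl
    have e2 : (Matrix.of Q *ᵥ w) ⬝ᵥ (Matrix.of Q *ᵥ w) = w ⬝ᵥ w := by
      rw [Matrix.dotProduct_mulVec, ← Matrix.mulVec_transpose, Matrix.mulVec_mulVec, hq,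
        Matrix.one_mulVec]
    have e3 : ∀ z : Fin n → ℝ, ∑ k, z k ^ 2 = z ⬝ᵥ z := fun z => by
      simp [dotProduct, sq]
    change ∑ k, ((fun k => ∑ j, Q k j * w j) k) ^ 2 = 1
    rw [e1, e3, e2, ← e3, hw]
  have h4 : (2 : ℝ) ^ n * ∫ Q, (∑ j, Q j₀ j * w j) ^ p ∂μQ ≤ 2 ^ n * (4 * (p / √n) ^ p) := by
    rw [h2, div_pow, div_le_iff₀ (by positivity)]
    refine h3.trans (le_of_eq ?_)
    field_simp
  exact le_of_mul_le_mul_left h4 (by positivity)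

lemma integral_overlap_pow_le (hQ : ∀ᵐ Q ∂μQ, (Matrix.of Q)ᵀ * Matrix.of Q = 1)
    (hinv : ∀ R : Matrix (Fin n) (Fin n) ℝ, Rᵀ * R = 1 →
      Measure.map (fun Q => fun i j => (R * Matrix.of Q) i j) μQ = μQ)
    (j₀ : Fin n) {p : ℕ} (hp : Even p) :
    ∫ q, (∑ j, q.1 j₀ j * q.2 j₀ j) ^ p ∂(μQ.prod μQ) ≤ 4 * (p / √n) ^ p := by
  have hI : Integrable (fun q : (Fin n → Fin n → ℝ) × (Fin n → Fin n → ℝ) =>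
      (∑ j, q.1 j₀ j * q.2 j₀ j) ^ p) (μQ.prod μQ) :=
    ((AllLp.sum _ fun j _ => ((allLp_orthogonal_entry hQ j₀ j).comp_mp measurePreserving_fst).mul
      ((allLp_orthogonal_entry hQ j₀ j).comp_mp measurePreserving_snd)).pow p).integrable
  rw [integral_prod_symm _ hI]
  have : ∫ _Q : Fin n → Fin n → ℝ, (4 * ((p : ℝ) / √n) ^ p) ∂μQ = 4 * (p / √n) ^ p := by simp
  rw [← this]
  refine integral_mono_ae hI.integral_prod_right (integrable_const _) ?_
  filter_upwards [hQ] with Q hq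
  refine integral_row_pow_le hQ hinv j₀ hp _ ?_
  have hq' : Matrix.of Q * (Matrix.of Q)ᵀ = 1 := mul_eq_one_comm.1 hq
  have := congrFun (congrFun hq' j₀) j₀
  rw [Matrix.mul_apply, Matrix.one_apply_eq] at this
  simpa [sq] using this

end Sphere

lemma sum_piAntidiag_prod_pow_div {ι : Type*} [Fintype ι] [DecidableEq ι] (z : ι → ℝ) (k : ℕ) :
    ∑ a ∈ Finset.piAntidiag Finset.univ k, ∏ j, z j ^ a j / (a j).factorial =
      (∑ j, z j) ^ k / k.factorial := by
  rw [Finset.sum_pow_eq_sum_piAntidiag, Finset.sum_div]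
  refine Finset.sum_congr rfl fun a ha => ?_
  have hs := Nat.multinomial_spec Finset.univ a
  rw [(Finset.mem_piAntidiag.1 ha).1] at hs
  have hs' : (∏ j, ((a j).factorial : ℝ)) * Nat.multinomial Finset.univ a = k.factorial := by
    exact_mod_cast hs
  have hp : (∏ j, ((a j).factorial : ℝ)) ≠ 0 :=
    Finset.prod_ne_zero_iff.2 fun j _ => by positivity
  rw [Finset.prod_div_distrib, ← hs']
  have hm : (Nat.multinomial Finset.univ a : ℝ) ≠ 0 := by
    intro h
    rw [h, mul_zero] at hs'
    exact (Nat.cast_ne_zero.2 k.factorial_ne_zero) hs'.symm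
  field_simp

/-- Vectors of exponents with total degree at most `D`. -/
def vecDegLE (N D : ℕ) : Finset (Fin N → ℕ) :=
  (Fintype.piFinset fun _ => Finset.range (D + 1)).filter fun k => ∑ i, k i ≤ D

lemma mem_vecDegLE {N D : ℕ} {k : Fin N → ℕ} : k ∈ vecDegLE N D ↔ ∑ i, k i ≤ D := by
  simp only [vecDegLE, Finset.mem_filter, Fintype.mem_piFinset, Finset.mem_range,
    and_iff_right_iff_imp]
  intro h i
  have h1 : k i ≤ ∑ i, k i := Finset.single_le_sum (fun _ _ => Nat.zero_le _)
    (Finset.mem_univ i)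
  omega

lemma sum_degLE_eq (N n D : ℕ) (z : Fin n → ℝ) (a : ℕ → ℝ) :
    ∑ α ∈ degLE N n D, ∏ i, (a (∑ j, α i j) * ∏ j, z j ^ α i j / (α i j).factorial) =
      ∑ k ∈ vecDegLE N D, (∏ i, a (k i) / (k i).factorial) * (∑ j, z j) ^ (∑ i, k i) := by
  classical
  rw [← Finset.sum_fiberwise_of_maps_to (s := degLE N n D) (t := vecDegLE N D)
    (g := fun α i => ∑ j, α i j) fun α hα => mem_vecDegLE.2 (mem_degLE.1 hα)]
  refine Finset.sum_congr rfl fun k hk => ?_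
  have e : (degLE N n D).filter (fun α => (fun i => ∑ j, α i j) = k) =
      Fintype.piFinset fun i => Finset.piAntidiag Finset.univ (k i) := by
    ext α
    simp only [Finset.mem_filter, mem_degLE, Fintype.mem_piFinset, Finset.mem_piAntidiag,
      Finset.mem_univ, implies_true, and_true]
    constructor
    · rintro ⟨_, rfl⟩ i
      rfl
    · intro h
      refine ⟨?_, funext h⟩
      simp only [h]
      exact mem_vecDegLE.1 hk
  rw [e, ← Finset.prod_univ_sum (fun i => Finset.piAntidiag Finset.univ (k i))
    (fun i (b : Fin n → ℕ) => a (∑ j, b j) * ∏ j, z j ^ b j / (b j).factorial),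
    ← Finset.prod_pow_eq_pow_sum, ← Finset.prod_mul_distrib]
  refine Finset.prod_congr rfl fun i _ => ?_
  rw [Finset.sum_congr (g := fun b : Fin n → ℕ =>
    a (k i) * ∏ j, z j ^ b j / (b j).factorial) rfl fun b hb => by
      rw [(Finset.mem_piAntidiag.1 hb).1], ← Finset.mul_sum, sum_piAntidiag_prod_pow_div]
  ring

/-- Hermite moments of the Bernoulli–Rademacher distribution. -/
noncomputable def brHerm (N : ℕ) (ρ : ℝ) (k : ℕ) : ℝ :=
  ∫ x, (hermiteR k).eval (√N * x) ∂(brMeasure N ρ)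

section Moments

variable {N : ℕ} {ρ : ℝ}

lemma brHerm_eq (hN : 0 < N) (h0 : 0 < ρ) (h1 : ρ ≤ 1) (k : ℕ) :
    brHerm N ρ k = (1 - ρ) * (hermiteR k).eval 0 + ρ / 2 * (hermiteR k).eval (√ρ)⁻¹ +
      ρ / 2 * (hermiteR k).eval (-(√ρ)⁻¹) := by
  have hN' : (√N : ℝ) ≠ 0 := (Real.sqrt_pos.2 (by exact_mod_cast hN)).ne'
  have e : √N * (√(N * ρ))⁻¹ = (√ρ)⁻¹ := by
    rw [Real.sqrt_mul (by positivity), mul_inv, ← mul_assoc, mul_inv_cancel₀ hN', one_mul]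
  rw [brHerm, integral_brMeasure N h0.le h1, mul_neg, e, mul_zero]

lemma brHerm_odd (hN : 0 < N) (h0 : 0 < ρ) (h1 : ρ ≤ 1) {k : ℕ} (hk : Odd k) :
    brHerm N ρ k = 0 := by
  have h := hermiteR_eval_neg k 0
  rw [neg_zero, hk.neg_one_pow] at h
  rw [brHerm_eq hN h0 h1, hermiteR_eval_neg, hk.neg_one_pow, show (hermiteR k).eval 0 = 0 by linarith]
  ring

lemma brHerm_zero (hN : 0 < N) (h0 : 0 < ρ) (h1 : ρ ≤ 1) : brHerm N ρ 0 = 1 := by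
  rw [brHerm_eq hN h0 h1]
  simp only [hermiteR_eval_zero]
  ring

lemma brHerm_two (hN : 0 < N) (h0 : 0 < ρ) (h1 : ρ ≤ 1) : brHerm N ρ 2 = 0 := by
  have hs : (√ρ)⁻¹ ^ 2 = ρ⁻¹ := by rw [inv_pow, Real.sq_sqrt h0.le]
  rw [brHerm_eq hN h0 h1]
  simp only [hermiteR_eval_succ_succ 0, zero_add, hermiteR_eval_one, hermiteR_eval_zero]
  have : ρ * ρ⁻¹ = 1 := mul_inv_cancel₀ h0.ne'
  push_cast
  linear_combination ρ * hs + this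

lemma brHerm_sq_le (hN : 0 < N) (h0 : 0 < ρ) (h1 : ρ ≤ 1) {k : ℕ} (hk : 2 ≤ k) :
    brHerm N ρ k ^ 2 ≤ 4 * (k.factorial : ℝ) ^ 2 * ρ ^ 2 * (ρ⁻¹) ^ k := by
  set T : ℝ := (√ρ)⁻¹ with hT
  have hsρ : 0 < √ρ := Real.sqrt_pos.2 h0
  have hT2 : T ^ 2 = ρ⁻¹ := by rw [hT, inv_pow, Real.sq_sqrt h0.le]
  have hT0 : 0 < T := inv_pos.2 hsρ
  have hT1 : 1 ≤ T := one_le_inv_iff₀.2 ⟨hsρ, Real.sqrt_le_one.2 h1⟩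
  have hρT : ρ * T ^ k = T ^ (k - 2) := by
    obtain ⟨m, rfl⟩ := Nat.exists_eq_add_of_le hk
    rw [pow_add, hT2, Nat.add_sub_cancel_left, ← mul_assoc, mul_inv_cancel₀ h0.ne', one_mul]
  have h1' : 1 ≤ ρ * T ^ k := by rw [hρT]; exact one_le_pow₀ hT1
  have a0 : |(hermiteR k).eval 0| ≤ k.factorial := by
    simpa using abs_hermiteR_eval_le k (le_refl (1 : ℝ)) (x := 0) (by simp)
  have a1 : |(hermiteR k).eval T| ≤ k.factorial * T ^ k :=
    abs_hermiteR_eval_le k hT1 (by rw [abs_of_pos hT0])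
  have a2 : |(hermiteR k).eval (-T)| ≤ k.factorial * T ^ k :=
    abs_hermiteR_eval_le k hT1 (by rw [abs_neg, abs_of_pos hT0])
  have hm : |brHerm N ρ k| ≤ 2 * k.factorial * (ρ * T ^ k) := by
    rw [brHerm_eq hN h0 h1, ← hT]
    have hf : (1 : ℝ) ≤ k.factorial := by exact_mod_cast k.factorial_pos
    calc _ ≤ |(1 - ρ) * (hermiteR k).eval 0| + |ρ / 2 * (hermiteR k).eval T| +
          |ρ / 2 * (hermiteR k).eval (-T)| := abs_add_three _ _ _
      _ = (1 - ρ) * |(hermiteR k).eval 0| + ρ / 2 * |(hermiteR k).eval T| +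
          ρ / 2 * |(hermiteR k).eval (-T)| := by
        rw [abs_mul, abs_mul, abs_mul, abs_of_nonneg (by linarith : 0 ≤ 1 - ρ),
          abs_of_nonneg (by linarith : 0 ≤ ρ / 2)]
      _ ≤ 1 * k.factorial + ρ / 2 * (k.factorial * T ^ k) + ρ / 2 * (k.factorial * T ^ k) := by
        gcongr
        linarith
      _ = k.factorial * 1 + k.factorial * (ρ * T ^ k) := by ring
      _ ≤ k.factorial * (ρ * T ^ k) + k.factorial * (ρ * T ^ k) := by gcongr
      _ = _ := by ring
  calc brHerm N ρ k ^ 2 = |brHerm N ρ k| ^ 2 := (sq_abs _).symm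
    _ ≤ (2 * k.factorial * (ρ * T ^ k)) ^ 2 := by gcongr
    _ = 4 * (k.factorial : ℝ) ^ 2 * ρ ^ 2 * (T ^ 2) ^ k := by ring
    _ = _ := by rw [hT2]

/-- The generating function of squared Hermite moments is at most `1 + 1/N`. -/
lemma sum_brHerm_sq_le {n D : ℕ} (hn : 0 < n) (hnN : n ≤ N) (h0 : 0 < ρ) (h1 : ρ ≤ 1) (hD : 1 ≤ D)
    (h : 4 * (D : ℝ) ^ 9 * N ≤ (n * ρ) ^ 2) :
    ∑ k ∈ Finset.range (D + 1), brHerm N ρ k ^ 2 / k.factorial * (D / √n) ^ k ≤ 1 + 1 / N := by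
  have hN : 0 < N := hn.trans_le hnN
  have hN' : (0 : ℝ) < N := by exact_mod_cast hN
  have hn' : (0 : ℝ) < n := by exact_mod_cast hn
  have hnN' : (n : ℝ) ≤ N := by exact_mod_cast hnN
  have hD' : (1 : ℝ) ≤ D := by exact_mod_cast hD
  have hs : (√n : ℝ) ^ 2 = n := Real.sq_sqrt hn'.le
  have hs0 : (0 : ℝ) < √n := Real.sqrt_pos.2 hn'
  set x : ℝ := D * (D / √n) * ρ⁻¹ with hx
  have hx0 : 0 ≤ x := by positivity
  have hx4 : x ^ 4 = (D : ℝ) ^ 8 / (n ^ 2 * ρ ^ 4) := by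
    have h4 : (√n : ℝ) ^ 4 = n ^ 2 := by
      rw [show (√n : ℝ) ^ 4 = (√n ^ 2) ^ 2 by ring, hs]
    rw [hx, mul_pow, mul_pow, div_pow, h4, inv_pow]
    field_simp
  have hx1 : x ≤ 1 := by
    have : x ^ 4 ≤ 1 := by
      rw [hx4, div_le_one (by positivity)]
      have e1 : (D : ℝ) ^ 4 ≤ n * ρ ^ 2 := by
        have : (D : ℝ) ^ 4 * n ≤ (n * ρ ^ 2) * n := by
          calc (D : ℝ) ^ 4 * n ≤ (D : ℝ) ^ 9 * N := by gcongr; norm_num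
            _ ≤ 4 * (D : ℝ) ^ 9 * N := by
              have : 0 ≤ (D : ℝ) ^ 9 * N := by positivity
              linarith
            _ ≤ _ := h
            _ = _ := by ring
        exact le_of_mul_le_mul_right this hn'
      calc (D : ℝ) ^ 8 = ((D : ℝ) ^ 4) ^ 2 := by ring
        _ ≤ (n * ρ ^ 2) ^ 2 := by gcongr
        _ = _ := by ring
    by_contra! hc
    have := one_lt_pow₀ hc (by norm_num : (4 : ℕ) ≠ 0)
    linarith
  have hterm : ∀ k ∈ Finset.range D, brHerm N ρ (k + 1) ^ 2 / (k + 1).factorial *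
      (D / √n) ^ (k + 1) ≤ 1 / (D * N) := by
    intro k hk
    have hkD : k + 1 ≤ D := Finset.mem_range.1 hk
    rcases Nat.even_or_odd (k + 1) with he | ho
    · by_cases h2 : k + 1 = 2
      · rw [h2, brHerm_two hN h0 h1]
        simp only [ne_eq, OfNat.ofNat_ne_zero, not_false_eq_true, zero_pow, zero_div, zero_mul]
        positivity
      · have h4 : 4 ≤ k + 1 := by
          obtain ⟨r, hr⟩ := he
          omega
        have hf : ((k + 1).factorial : ℝ) ≤ (D : ℝ) ^ (k + 1) := by
          calc ((k + 1).factorial : ℝ) ≤ ((k + 1 : ℕ) : ℝ) ^ (k + 1) := by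
                exact_mod_cast Nat.factorial_le_pow (k + 1)
            _ ≤ _ := by gcongr
        calc brHerm N ρ (k + 1) ^ 2 / (k + 1).factorial * (D / √n) ^ (k + 1)
            ≤ 4 * ((k + 1).factorial : ℝ) ^ 2 * ρ ^ 2 * (ρ⁻¹) ^ (k + 1) / (k + 1).factorial *
              (D / √n) ^ (k + 1) := by
              gcongr
              exact brHerm_sq_le hN h0 h1 (by omega)
          _ = 4 * ρ ^ 2 * ((k + 1).factorial * (D / √n) ^ (k + 1) * (ρ⁻¹) ^ (k + 1)) := by
              field_simp
          _ ≤ 4 * ρ ^ 2 * ((D : ℝ) ^ (k + 1) * (D / √n) ^ (k + 1) * (ρ⁻¹) ^ (k + 1)) := by gcongr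
          _ = 4 * ρ ^ 2 * x ^ (k + 1) := by rw [hx, mul_pow, mul_pow]
          _ ≤ 4 * ρ ^ 2 * x ^ 4 := by
              gcongr 4 * ρ ^ 2 * ?_
              exact pow_le_pow_of_le_one hx0 hx1 h4
          _ = 4 * (D : ℝ) ^ 8 / (n * ρ) ^ 2 := by rw [hx4]; field_simp
          _ ≤ 1 / (D * N) := by
              rw [div_le_div_iff₀ (by positivity) (by positivity)]
              linarith
    · rw [brHerm_odd hN h0 h1 ho]
      simp only [ne_eq, OfNat.ofNat_ne_zero, not_false_eq_true, zero_pow, zero_div, zero_mul]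
      positivity
  rw [Finset.sum_range_succ', brHerm_zero hN h0 h1]
  have := Finset.sum_le_sum hterm
  rw [Finset.sum_const, Finset.card_range, nsmul_eq_mul] at this
  have e : (D : ℝ) * (1 / (D * N)) = 1 / N := by field_simp
  rw [e] at this
  simp only [Nat.factorial_zero, pow_zero, Nat.cast_one]
  linarith

end Moments

/-- Norm of the degree-`D` part of the likelihood ratio. -/
lemma sum_sq_hermite_coeff_le {N n D : ℕ} {ρ : ℝ} {μQ : Measure (Fin n → Fin n → ℝ)}
    [IsProbabilityMeasure μQ] (hQ : ∀ᵐ Q ∂μQ, (Matrix.of Q)ᵀ * Matrix.of Q = 1)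
    (hinv : ∀ R : Matrix (Fin n) (Fin n) ℝ, Rᵀ * R = 1 →
      Measure.map (fun Q => fun i j => (R * Matrix.of Q) i j) μQ = μQ)
    (j₀ : Fin n) (hnN : n ≤ N) (h0 : 0 < ρ) (h1 : ρ ≤ 1) (hD : 1 ≤ D)
    (h : 4 * (D : ℝ) ^ 9 * N ≤ (n * ρ) ^ 2) :
    ∑ α ∈ degLE N n D,
      ((∫ Q, ∏ i, ∏ j, Q j₀ j ^ α i j / √((α i j).factorial : ℝ) ∂μQ) *
        ∏ i, brHerm N ρ (∑ j, α i j)) ^ 2 ≤ 12 := by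
  have hn : 0 < n := j₀.pos
  have hN : 0 < N := hn.trans_le hnN
  set m := brHerm N ρ with hm
  set z : (Fin n → Fin n → ℝ) × (Fin n → Fin n → ℝ) → Fin n → ℝ :=
    fun q j => q.1 j₀ j * q.2 j₀ j with hz
  have hzL : ∀ j, AllLp (fun q => z q j) (μQ.prod μQ) := fun j =>
    ((allLp_orthogonal_entry hQ j₀ j).comp_mp measurePreserving_fst).mul
      ((allLp_orthogonal_entry hQ j₀ j).comp_mp measurePreserving_snd)
  have e1 : ∀ α : Fin N → Fin n → ℕ,
      ((∫ Q, ∏ i, ∏ j, Q j₀ j ^ α i j / √((α i j).factorial : ℝ) ∂μQ) *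
        ∏ i, m (∑ j, α i j)) ^ 2 =
      ∫ q, ∏ i, (m (∑ j, α i j) ^ 2 * ∏ j, z q j ^ α i j / (α i j).factorial)
        ∂(μQ.prod μQ) := by
    intro α
    rw [mul_pow, sq (∫ Q, _ ∂μQ), ← integral_prod_mul, ← integral_mul_const]
    congr 1
    ext q
    rw [← Finset.prod_mul_distrib, ← Finset.prod_pow, ← Finset.prod_mul_distrib]
    refine Finset.prod_congr rfl fun i _ => ?_
    rw [← Finset.prod_mul_distrib, mul_comm]
    congr 1
    refine Finset.prod_congr rfl fun j _ => ?_
    rw [div_mul_div_comm, ← mul_pow, Real.mul_self_sqrt (by positivity)]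
  have hI : ∀ p : ℕ, Integrable (fun q => (∑ j, z q j) ^ p) (μQ.prod μQ) := fun p =>
    ((AllLp.sum _ fun j _ => hzL j).pow p).integrable
  have e2 : ∑ α ∈ degLE N n D,
      ((∫ Q, ∏ i, ∏ j, Q j₀ j ^ α i j / √((α i j).factorial : ℝ) ∂μQ) *
        ∏ i, m (∑ j, α i j)) ^ 2 =
      ∑ k ∈ vecDegLE N D, (∏ i, m (k i) ^ 2 / (k i).factorial) *
        ∫ q, (∑ j, z q j) ^ (∑ i, k i) ∂(μQ.prod μQ) := by
    simp only [e1]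
    rw [← integral_finsetSum]
    · simp only [sum_degLE_eq N n D _ (fun k => m k ^ 2)]
      rw [integral_finsetSum _ fun k _ => (hI _).const_mul _]
      exact Finset.sum_congr rfl fun k _ => integral_const_mul _ _
    · exact fun α _ => (AllLp.prod _ fun i _ => AllLp.const_mul _ <| AllLp.prod _ fun j _ =>
        by simpa only [div_eq_mul_inv] using ((hzL j).pow _).mul (AllLp.const _)).integrable
  rw [e2]
  have hT0 : 0 ≤ (D : ℝ) / √n := by positivity
  have hterm : ∀ k ∈ vecDegLE N D, (∏ i, m (k i) ^ 2 / (k i).factorial) *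
        ∫ q, (∑ j, z q j) ^ (∑ i, k i) ∂(μQ.prod μQ) ≤
      4 * ∏ i, (m (k i) ^ 2 / (k i).factorial * (D / √n) ^ k i) := by
    intro k hk
    have hp : 0 ≤ ∏ i, m (k i) ^ 2 / (k i).factorial :=
      Finset.prod_nonneg fun i _ => by positivity
    by_cases he : ∀ i, Even (k i)
    · have hE : Even (∑ i, k i) := Finset.even_sum _ fun i _ => he i
      have hle := integral_overlap_pow_le hQ hinv j₀ hE
      have hkD : ((∑ i, k i : ℕ) : ℝ) ≤ D := by exact_mod_cast mem_vecDegLE.1 hk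
      rw [Finset.prod_mul_distrib, Finset.prod_pow_eq_pow_sum, mul_left_comm]
      refine mul_le_mul_of_nonneg_left (hle.trans ?_) hp
      gcongr
    · obtain ⟨i, hi⟩ := not_forall.1 he
      have h00 : m (k i) = 0 := brHerm_odd hN h0 h1 (Nat.not_even_iff_odd.1 hi)
      rw [Finset.prod_eq_zero (Finset.mem_univ i) (by rw [h00]; simp), zero_mul]
      exact mul_nonneg (by norm_num) (Finset.prod_nonneg fun i _ => by positivity)
  have hg := sum_brHerm_sq_le hn hnN h0 h1 hD h
  have hg0 : 0 ≤ ∑ k ∈ Finset.range (D + 1), m k ^ 2 / k.factorial * ((D : ℝ) / √n) ^ k :=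
    Finset.sum_nonneg fun k _ => by positivity
  have hN' : (N : ℝ) ≠ 0 := by exact_mod_cast hN.ne'
  calc _ ≤ ∑ k ∈ vecDegLE N D, 4 * ∏ i, (m (k i) ^ 2 / (k i).factorial * ((D : ℝ) / √n) ^ k i) :=
        Finset.sum_le_sum hterm
    _ ≤ ∑ k ∈ Fintype.piFinset fun _ : Fin N => Finset.range (D + 1),
          4 * ∏ i, (m (k i) ^ 2 / (k i).factorial * ((D : ℝ) / √n) ^ k i) :=
        Finset.sum_le_sum_of_subset_of_nonneg (Finset.filter_subset _ _) fun k _ _ =>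
          mul_nonneg (by norm_num) (Finset.prod_nonneg fun i _ => by positivity)
    _ = 4 * (∑ k ∈ Finset.range (D + 1), m k ^ 2 / k.factorial * ((D : ℝ) / √n) ^ k) ^ N := by
        rw [← Finset.mul_sum, ← Finset.prod_univ_sum (fun _ : Fin N => Finset.range (D + 1))
          (fun _ k => m k ^ 2 / k.factorial * ((D : ℝ) / √n) ^ k)]
        simp
    _ ≤ 4 * (Real.exp (1 / N)) ^ N := by
        gcongr
        have := Real.add_one_le_exp (1 / (N : ℝ))
        linarith
    _ = 4 * Real.exp 1 := by
        rw [← Real.exp_nat_mul]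
        congr 2
        field_simp
    _ ≤ 12 := by linarith [Real.exp_one_lt_d9]

/-- A polynomial of degree at most `D` cannot have planted mean much larger than its null
second moment. -/
lemma sq_integral_planted_le {N n D : ℕ} {ρ : ℝ} {μQ : Measure (Fin n → Fin n → ℝ)}
    [IsProbabilityMeasure μQ] (hQ : ∀ᵐ Q ∂μQ, (Matrix.of Q)ᵀ * Matrix.of Q = 1)
    (hinv : ∀ R : Matrix (Fin n) (Fin n) ℝ, Rᵀ * R = 1 →
      Measure.map (fun Q => fun i j => (R * Matrix.of Q) i j) μQ = μQ)
    (hn : 0 < n) (hnN : n ≤ N) (h0 : 0 < ρ) (h1 : ρ ≤ 1) (hD : 1 ≤ D)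
    (h : 4 * (D : ℝ) ^ 9 * N ≤ (n * ρ) ^ 2) {σ2 : NNReal}
    (hs : IsStein (gaussianReal 0 σ2) √N) (c : (Fin N → Fin n → ℕ) → ℝ) :
    (∫ w : (Fin N → ℝ) × (Fin n → Fin n → ℝ) × (Fin N → Fin (n - 1) → ℝ),
        ∑ α ∈ degLE N n D, c α *
          ∏ i, ∏ j, hermN √N (α i j) ((gaussBasis w.1 w.2.2 * Matrix.of w.2.1) i j)
        ∂((brVec N ρ).prod (μQ.prod (iidGaussVec N (n - 1) σ2)))) ^ 2 ≤
      12 * ∑ α ∈ degLE N n D, c α ^ 2 := by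
  have := isProbabilityMeasure_brMeasure N h0.le h1
  have : IsProbabilityMeasure (brVec N ρ) := by unfold brVec; infer_instance
  have : IsProbabilityMeasure (iidGaussVec N (n - 1) σ2) := by unfold iidGaussVec; infer_instance
  rw [integral_finsetSum]
  · simp only [integral_const_mul, integral_hermN_planted hs h0.le h1 hQ ⟨0, hn⟩ rfl]
    refine (Finset.sum_mul_sq_le_sq_mul_sq _ _ _).trans ?_
    rw [mul_comm]
    exact mul_le_mul_of_nonneg_right (sum_sq_hermite_coeff_le hQ hinv ⟨0, hn⟩ hnN h0 h1 hD h)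
      (Finset.sum_nonneg fun _ _ => sq_nonneg _)
  · intro α _
    refine (AllLp.const_mul _ <| AllLp.prod _ fun i _ => AllLp.prod _ fun j _ => ?_).integrable
    simp only [hermN, div_eq_mul_inv]
    exact (((allLp_planted_entry h0.le h1 hQ i j).const_mul _).polynomial_eval _).mul
      (AllLp.const _)

lemma specNorm_eq_norm_toEuclideanCLM {m : ℕ} (A : Matrix (Fin m) (Fin m) ℝ) :
    specNorm A = ‖Matrix.toEuclideanCLM (n := Fin m) (𝕜 := ℝ) A‖ := rfl

lemma specNorm_nonneg {m k : ℕ} (A : Matrix (Fin m) (Fin k) ℝ) : 0 ≤ specNorm A := norm_nonneg _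

lemma specNorm_pow_two_pow {m : ℕ} {A : Matrix (Fin m) (Fin m) ℝ} (hA : Aᵀ = A) (q : ℕ) :
    specNorm (A ^ 2 ^ q) = specNorm A ^ 2 ^ q := by
  have h : IsSelfAdjoint (Matrix.toEuclideanCLM (n := Fin m) (𝕜 := ℝ) A) := by
    rw [isSelfAdjoint_iff, ← map_star, Matrix.star_eq_conjTranspose,
      Matrix.conjTranspose_eq_transpose_of_trivial, hA]
  rw [specNorm_eq_norm_toEuclideanCLM, map_pow, h.norm_pow_two_pow,
    specNorm_eq_norm_toEuclideanCLM]

lemma specNorm_sq_le_sum_sq {m : ℕ} (A : Matrix (Fin m) (Fin m) ℝ) :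
    specNorm A ^ 2 ≤ ∑ a, ∑ b, A a b ^ 2 := by
  have h0 : 0 ≤ ∑ a, ∑ b, A a b ^ 2 :=
    Finset.sum_nonneg fun _ _ => Finset.sum_nonneg fun _ _ => sq_nonneg _
  rw [← Real.le_sqrt (specNorm_nonneg A) h0]
  refine ContinuousLinearMap.opNorm_le_bound _ (Real.sqrt_nonneg _) fun x => ?_
  rw [EuclideanSpace.norm_eq, EuclideanSpace.norm_eq, ← Real.sqrt_mul h0]
  refine Real.sqrt_le_sqrt ?_
  simp only [Real.norm_eq_abs, sq_abs]
  rw [Finset.sum_mul]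
  refine Finset.sum_le_sum fun a _ => ?_
  exact Finset.sum_mul_sq_le_sq_mul_sq Finset.univ (fun b => A a b) (fun b => x b)

lemma sum_sq_le_specNorm_sq {m : ℕ} (A : Matrix (Fin m) (Fin m) ℝ) :
    ∑ a, ∑ b, A a b ^ 2 ≤ m * specNorm A ^ 2 := by
  rw [Finset.sum_comm]
  have h : ∀ b, ∑ a, A a b ^ 2 ≤ specNorm A ^ 2 := by
    intro b
    have h1 := (LinearMap.toContinuousLinearMap (Matrix.toEuclideanLin A)).le_opNorm
      (EuclideanSpace.single b (1 : ℝ))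
    rw [PiLp.norm_single, norm_one, mul_one] at h1
    have h2 : ‖(LinearMap.toContinuousLinearMap (Matrix.toEuclideanLin A))
        (EuclideanSpace.single b (1 : ℝ))‖ ^ 2 = ∑ a, A a b ^ 2 := by
      rw [EuclideanSpace.norm_sq_eq]
      simp
    rw [← h2]
    exact pow_le_pow_left₀ (norm_nonneg _) h1 2
  calc _ ≤ ∑ _b : Fin m, specNorm A ^ 2 := Finset.sum_le_sum fun b _ => h b
    _ = _ := by simp

lemma continuous_specNorm {m k : ℕ} :
    Continuous (specNorm : Matrix (Fin m) (Fin k) ℝ → ℝ) := by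
  let L : Matrix (Fin m) (Fin k) ℝ →ₗ[ℝ]
      (EuclideanSpace ℝ (Fin k) →L[ℝ] EuclideanSpace ℝ (Fin m)) :=
    LinearMap.toContinuousLinearMap.toLinearMap ∘ₗ (Matrix.toEuclideanLin).toLinearMap
  exact (LinearMap.continuous_of_finiteDimensional L).norm

lemma totalDegree_matrix_pow_le {σ : Type*} {m d : ℕ} (P : Matrix (Fin m) (Fin m) (MvPolynomial σ ℝ))
    (hP : ∀ a b, (P a b).totalDegree ≤ d) (K : ℕ) :
    ∀ a b, ((P ^ K) a b).totalDegree ≤ K * d := by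
  induction K with
  | zero =>
    intro a b
    rw [pow_zero, Matrix.one_apply]
    split_ifs <;> simp
  | succ K ih =>
    intro a b
    rw [pow_succ, Matrix.mul_apply]
    refine MvPolynomial.totalDegree_finsetSum_le fun c _ => ?_
    refine (MvPolynomial.totalDegree_mul _ _).trans ?_
    rw [add_mul, one_mul]
    exact add_le_add (ih a c) (hP c b)

lemma exists_polynomial_sum_sq_pow {X σ : Type*} {m d : ℕ} (ev : X → σ → ℝ)
    (M : X → Matrix (Fin m) (Fin m) ℝ)
    (hM : ∀ a b, ∃ p : MvPolynomial σ ℝ, p.totalDegree ≤ d ∧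
      ∀ Y, M Y a b = MvPolynomial.eval (ev Y) p) (K : ℕ) :
    ∃ p : MvPolynomial σ ℝ, p.totalDegree ≤ 2 * (K * d) ∧
      ∀ Y, ∑ a, ∑ b, ((M Y) ^ K) a b ^ 2 = MvPolynomial.eval (ev Y) p := by
  choose p hp hpe using hM
  let P : Matrix (Fin m) (Fin m) (MvPolynomial σ ℝ) := Matrix.of p
  refine ⟨∑ a, ∑ b, (P ^ K) a b ^ 2, ?_, fun Y => ?_⟩
  · refine MvPolynomial.totalDegree_finsetSum_le fun a _ =>
      MvPolynomial.totalDegree_finsetSum_le fun b _ => ?_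
    refine (MvPolynomial.totalDegree_pow _ _).trans ?_
    exact Nat.mul_le_mul_left 2 (totalDegree_matrix_pow_le P hp K a b)
  · have h : M Y = (MvPolynomial.eval (ev Y)).mapMatrix P := by
      ext a b
      exact hpe a b Y
    rw [h, ← map_pow]
    simp

/-- If a function is hypercontractive and controlled by `G ^ p`, then a small probability
that `G ≥ t` bounds its second moment. -/
lemma integral_sq_le_of_small_tail {Ω : Type*} [MeasurableSpace Ω] {ν : Measure Ω}
    [IsProbabilityMeasure ν] {f G : Ω → ℝ} (hf : AllLp f ν) (hG : Measurable G) {a t B δ : ℝ} {p : ℕ}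
    (hG0 : ∀ ω, 0 ≤ G ω) (hf0 : ∀ ω, 0 ≤ f ω) (ha : 0 ≤ a) (hfG : ∀ ω, f ω ≤ a * G ω ^ p)
    (hB : ∫ ω, f ω ^ 4 ∂ν ≤ (B * ∫ ω, f ω ^ 2 ∂ν) ^ 2) (hδ0 : 0 ≤ δ)
    (hν : ν {ω | t ≤ G ω} ≤ ENNReal.ofReal δ) (hδ : B ^ 2 * δ ≤ 1 / 4) :
    ∫ ω, f ω ^ 2 ∂ν ≤ 2 * (a * t ^ p) ^ 2 := by
  set E : Set Ω := {ω | t ≤ G ω} with hE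
  have hEm : MeasurableSet E := measurableSet_le measurable_const hG
  set S := ∫ ω, f ω ^ 2 ∂ν with hS
  have hS0 : 0 ≤ S := integral_nonneg fun ω => sq_nonneg _
  set I : Ω → ℝ := E.indicator fun _ => 1 with hI
  have hIL : AllLp I ν := AllLp.of_bound ((measurable_const.indicator hEm).aestronglyMeasurable) 1
    (Filter.Eventually.of_forall fun ω => by
      by_cases h : ω ∈ E <;> simp [hI, h])
  have hreal : ν.real E ≤ δ := by
    rw [Measure.real]
    exact ENNReal.toReal_le_of_le_ofReal hδ0 hν
  have hII : ∫ ω, I ω ^ 2 ∂ν = ν.real E := by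
    have : (fun ω => I ω ^ 2) = I := by
      ext ω
      by_cases h : ω ∈ E <;> simp [hI, h]
    rw [this, hI, integral_indicator_const _ hEm]
    simp
  have h1 : (∫ ω, f ω ^ 2 * I ω ∂ν) ^ 2 ≤ (S / 2) ^ 2 := by
    have h := (hf.pow 2).sq_integral_mul_le hIL
    rw [hII] at h
    have e : ∀ ω, (f ω ^ 2) ^ 2 = f ω ^ 4 := fun ω => by ring
    simp only [e] at h
    have h4 : 0 ≤ ∫ ω, f ω ^ 4 ∂ν := integral_nonneg fun ω => by positivity
    calc _ ≤ _ := h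
      _ ≤ (∫ ω, f ω ^ 4 ∂ν) * δ := by gcongr
      _ ≤ (B * S) ^ 2 * δ := by gcongr
      _ = (B ^ 2 * δ) * S ^ 2 := by ring
      _ ≤ 1 / 4 * S ^ 2 := by gcongr
      _ = _ := by ring
  have h2 : ∫ ω, f ω ^ 2 * I ω ∂ν ≤ S / 2 :=
    (abs_le_of_sq_le_sq' h1 (by positivity)).2
  have h3 : S ≤ ∫ ω, ((a * t ^ p) ^ 2 + f ω ^ 2 * I ω) ∂ν := by
    have hint : Integrable (fun ω => f ω ^ 2 * I ω) ν := ((hf.pow 2).mul hIL).integrable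
    refine integral_mono (hf.pow 2).integrable ((integrable_const _).add hint) fun ω => ?_
    by_cases h : ω ∈ E
    · simp only [hI, Set.indicator_of_mem h, mul_one]
      have : 0 ≤ (a * t ^ p) ^ 2 := sq_nonneg _
      linarith
    · simp only [hI, Set.indicator_of_notMem h, mul_zero, add_zero]
      have hlt : G ω < t := not_le.1 h
      have := hG0 ω
      have : f ω ≤ a * t ^ p := (hfG ω).trans (by gcongr)
      exact pow_le_pow_left₀ (hf0 ω) this 2
  rw [integral_add (integrable_const _) ((hf.pow 2).mul hIL).integrable] at h3
  simp only [integral_const, probReal_univ, smul_eq_mul, one_mul] at h3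
  linarith

/-- A lower bound on an expectation from a lower bound on a tail probability. -/
lemma mul_le_integral_of_le_measure {Ω : Type*} [MeasurableSpace Ω] {ν : Measure Ω}
    [IsProbabilityMeasure ν] {f G : Ω → ℝ} (hf : Integrable f ν) {t c : ℝ} {p : ℕ}
    (hf0 : ∀ ω, 0 ≤ f ω) (hfG : ∀ ω, G ω ^ p ≤ f ω) (ht : 0 ≤ t)
    (hν : ENNReal.ofReal c ≤ ν {ω | t ≤ G ω}) : t ^ p * c ≤ ∫ ω, f ω ∂ν := by
  have hM := mul_meas_ge_le_integral_of_nonneg (Filter.Eventually.of_forall hf0) hf (t ^ p)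
  refine le_trans ?_ hM
  refine mul_le_mul_of_nonneg_left ?_ (by positivity)
  refine (ENNReal.ofReal_le_iff_le_toReal (measure_ne_top _ _)).1 (hν.trans (measure_mono ?_))
  intro ω hω
  have h : t ≤ G ω := hω
  exact (pow_le_pow_left₀ ht h p).trans (hfG ω)

section Null

variable {N n D : ℕ} {γ : Measure ℝ} [IsProbabilityMeasure γ] {s : ℝ}

lemma integral_hermite_sum_sq (h : IsStein γ s) (c : (Fin N → Fin n → ℕ) → ℝ) :
    ∫ Y, (∑ α ∈ degLE N n D, c α * ∏ i, ∏ j, hermN s (α i j) (Y i j)) ^ 2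
      ∂(Measure.pi fun _ : Fin N => Measure.pi fun _ : Fin n => γ) = ∑ α ∈ degLE N n D, c α ^ 2 := by
  have H := ((h.hyperSystem D).pi n).pi N
  exact integral_sum_sq_of_orthonormal H.allLp H.norm_one H.orth _ c

/-- Bonami's lemma for Gaussian polynomials of degree at most `D`. -/
lemma integral_hermite_sum_pow_four_le (h : IsStein γ s) (c : (Fin N → Fin n → ℕ) → ℝ) :
    ∫ Y, (∑ α ∈ degLE N n D, c α * ∏ i, ∏ j, hermN s (α i j) (Y i j)) ^ 4
      ∂(Measure.pi fun _ : Fin N => Measure.pi fun _ : Fin n => γ) ≤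
      (9 ^ D * ∑ α ∈ degLE N n D, c α ^ 2) ^ 2 := by
  classical
  have H := (((h.hyperSystem D).pi n).pi N).hyper fun α => if ∑ i, ∑ j, α i j ≤ D then c α else 0
  have e1 : ∀ Y : Fin N → Fin n → ℝ,
      ∑ α ∈ degLE N n D, c α * ∏ i, ∏ j, hermN s (α i j) (Y i j) =
      ∑ α ∈ Fintype.piFinset fun _ => Fintype.piFinset fun _ => Finset.range (D + 1),
        (if ∑ i, ∑ j, α i j ≤ D then c α else 0) * ∏ i, ∏ j, hermN s (α i j) (Y i j) := by
    intro Y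
    rw [degLE, Finset.sum_filter]
    refine Finset.sum_congr rfl fun α _ => ?_
    split_ifs <;> simp
  simp only [e1]
  refine H.trans ?_
  refine pow_le_pow_left₀ (Finset.sum_nonneg fun α _ => mul_nonneg
    (Finset.prod_nonneg fun i _ => Finset.prod_nonneg fun j _ => by positivity) (sq_nonneg _)) ?_ 2
  rw [degLE, Finset.sum_filter, Finset.mul_sum]
  refine Finset.sum_le_sum fun α _ => ?_
  split_ifs with hα
  · simp only [Finset.prod_pow_eq_pow_sum]
    gcongr
    norm_num
  · simp

end Null

lemma isStein_gaussianReal_inv_natCast {N : ℕ} (hN : 0 < N) :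
    IsStein (gaussianReal 0 ((N : NNReal))⁻¹) √N := by
  have : (N : ℝ) ≠ 0 := by positivity
  refine isStein_gaussianReal (by positivity) ?_
  rw [Real.sq_sqrt (Nat.cast_nonneg N)]
  push_cast
  field_simp

lemma measurable_specNorm_of_polynomial {N n m d : ℕ}
    {M : (Fin N → Fin n → ℝ) → Matrix (Fin m) (Fin m) ℝ}
    (hM : ∀ a b : Fin m, ∃ p : MvPolynomial (Fin N × Fin n) ℝ, p.totalDegree ≤ d ∧
      ∀ Y, M Y a b = MvPolynomial.eval (fun q => Y q.1 q.2) p) :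
    Measurable fun Y => specNorm (M Y) := by
  refine (continuous_specNorm.comp (continuous_matrix fun a b => ?_)).measurable
  obtain ⟨p, -, hp⟩ := hM a b
  simp only [hp, MvPolynomial.eval_eq]
  fun_prop

/-- A symmetric matrix polynomial whose norm is below `t` with overwhelming probability under the
null law is unlikely to exceed `(1 + ε) * t` under the planted law. -/
lemma specNorm_not_distinguish {N n m d q D : ℕ} {ρ ε t δ : ℝ}
    {μQ : Measure (Fin n → Fin n → ℝ)} [IsProbabilityMeasure μQ]
    (hQ : ∀ᵐ Q ∂μQ, (Matrix.of Q)ᵀ * Matrix.of Q = 1)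
    (hinv : ∀ R : Matrix (Fin n) (Fin n) ℝ, Rᵀ * R = 1 →
      Measure.map (fun Q => fun i j => (R * Matrix.of Q) i j) μQ = μQ)
    (hn : 0 < n) (hnN : n ≤ N) (h0 : 0 < ρ) (h1 : ρ ≤ 1) (hε0 : 0 < ε) (hε1 : ε < 1) (ht : 0 < t)
    (hD : D = 2 * (2 ^ q * d)) (hd : 1 ≤ d) (h : 4 * (D : ℝ) ^ 9 * N ≤ (n * ρ) ^ 2)
    (hδ0 : 0 ≤ δ) (hδ : (9 ^ D) ^ 2 * δ ≤ 1 / 4) (hm : 7 * (m : ℝ) < (1 + ε) ^ (2 * 2 ^ q))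
    {M : (Fin N → Fin n → ℝ) → Matrix (Fin m) (Fin m) ℝ} (hsymm : ∀ Y, (M Y)ᵀ = M Y)
    (hM : ∀ a b : Fin m, ∃ p : MvPolynomial (Fin N × Fin n) ℝ, p.totalDegree ≤ d ∧
      ∀ Y, M Y a b = MvPolynomial.eval (fun q => Y q.1 q.2) p)
    (hP : ENNReal.ofReal (1 - ε / 4) ≤
      (Measure.map (fun w : (Fin N → ℝ) × (Fin n → Fin n → ℝ) × (Fin N → Fin (n - 1) → ℝ) =>
          fun i j => (gaussBasis w.1 w.2.2 * Matrix.of w.2.1) i j)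
        ((brVec N ρ).prod (μQ.prod (iidGaussVec N (n - 1) ((N : NNReal))⁻¹))))
        {Y | (1 + ε) * t ≤ specNorm (M Y)})
    (hN : (Measure.pi fun _ : Fin N => (Measure.pi fun _ : Fin n =>
        gaussianReal 0 ((N : NNReal))⁻¹)) {Y | t ≤ specNorm (M Y)} ≤ ENNReal.ofReal δ) :
    False := by
  have hs := isStein_gaussianReal_inv_natCast (hn.trans_le hnN)
  have := isProbabilityMeasure_brMeasure N h0.le h1
  have : IsProbabilityMeasure (brVec N ρ) := by unfold brVec; infer_instance
  have : IsProbabilityMeasure (iidGaussVec N (n - 1) ((N : NNReal))⁻¹) := by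
    unfold iidGaussVec; infer_instance
  obtain ⟨p, hp, hpe⟩ := exists_polynomial_sum_sq_pow
    (fun (Y : Fin N → Fin n → ℝ) (q : Fin N × Fin n) => Y q.1 q.2) M hM (2 ^ q)
  have hs0 : √(N : ℝ) ≠ 0 := by
    have : 0 < N := hn.trans_le hnN
    positivity
  obtain ⟨c, hc⟩ := exists_hermite_expansion hs0 p (hp.trans_eq hD.symm)
  set f : (Fin N → Fin n → ℝ) → ℝ := fun Y => MvPolynomial.eval (fun q => Y q.1 q.2) p with hf
  have hf0 : ∀ Y, 0 ≤ f Y := fun Y => by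
    simp only [hf, ← hpe]
    positivity
  have hpow : ∀ Y, specNorm (M Y) ^ (2 * 2 ^ q) = specNorm ((M Y) ^ 2 ^ q) ^ 2 := fun Y => by
    rw [specNorm_pow_two_pow (hsymm Y), ← pow_mul, mul_comm]
  have hlow : ∀ Y, specNorm (M Y) ^ (2 * 2 ^ q) ≤ f Y := fun Y => by
    simp only [hf, ← hpe, hpow]
    exact specNorm_sq_le_sum_sq _
  have hup : ∀ Y, f Y ≤ m * specNorm (M Y) ^ (2 * 2 ^ q) := fun Y => by
    simp only [hf, ← hpe, hpow]
    exact sum_sq_le_specNorm_sq _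
  have hG := measurable_specNorm_of_polynomial hM
  set S := ∑ α ∈ degLE N n D, c α ^ 2 with hS
  have hnull : S ≤ 2 * (m * t ^ (2 * 2 ^ q)) ^ 2 := by
    have hid : AllLp (fun y : ℝ => y) (gaussianReal 0 ((N : NNReal))⁻¹) :=
      fun p => memLp_id_gaussianReal p
    have hfL : AllLp f (Measure.pi fun _ : Fin N => (Measure.pi fun _ : Fin n =>
        gaussianReal 0 ((N : NNReal))⁻¹)) :=
      AllLp.mvPolynomial_eval (fun i : Fin N × Fin n => (hid.pi_eval i.2).pi_eval i.1) p
    have e2 := integral_hermite_sum_sq (N := N) (n := n) (D := D) hs c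
    have e4 := integral_hermite_sum_pow_four_le (N := N) (n := n) (D := D) hs c
    simp only [← hc] at e2 e4
    rw [← e2] at e4
    rw [hS, ← e2]
    exact integral_sq_le_of_small_tail hfL hG (fun _ => specNorm_nonneg _) hf0 (Nat.cast_nonneg m)
      hup e4 hδ0 hN hδ
  have hLe := fun i j => allLp_planted_entry (σ2 := ((N : NNReal))⁻¹) h0.le h1 hQ (N := N) i j
  have hmap : AEMeasurable (fun w : (Fin N → ℝ) × (Fin n → Fin n → ℝ) × (Fin N → Fin (n - 1) → ℝ) =>
      fun i j => (gaussBasis w.1 w.2.2 * Matrix.of w.2.1) i j)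
      ((brVec N ρ).prod (μQ.prod (iidGaussVec N (n - 1) ((N : NNReal))⁻¹))) :=
    aemeasurable_pi_lambda _ fun i => aemeasurable_pi_lambda _ fun j =>
      (hLe i j).integrable.aestronglyMeasurable.aemeasurable
  rw [Measure.map_apply_of_aemeasurable hmap (measurableSet_le measurable_const hG)] at hP
  have hfP := AllLp.mvPolynomial_eval (fun i : Fin N × Fin n => hLe i.1 i.2) p
  have hlb := mul_le_integral_of_le_measure hfP.integrable (fun w => hf0 _) (fun w => hlow _)
    (by positivity : 0 ≤ (1 + ε) * t) hP
  have hub := sq_integral_planted_le hQ hinv hn hnN h0 h1 (by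
    rw [hD]
    have : 0 < 2 ^ q * d := by positivity
    omega) h hs c
  rw [← hS] at hub
  have hcP : ∀ w : (Fin N → ℝ) × (Fin n → Fin n → ℝ) × (Fin N → Fin (n - 1) → ℝ),
      f (fun i j => (gaussBasis w.1 w.2.2 * Matrix.of w.2.1) i j) = ∑ α ∈ degLE N n D, c α *
        ∏ i, ∏ j, hermN √N (α i j) ((gaussBasis w.1 w.2.2 * Matrix.of w.2.1) i j) :=
    fun w => hc _
  simp only [← hcP] at hub
  set T := t ^ (2 * 2 ^ q) with hT
  have hT0 : 0 < T := by positivity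
  rw [mul_pow, ← hT] at hlb
  have h2 : ((1 + ε) ^ (2 * 2 ^ q) * T * (1 - ε / 4)) ^ 2 ≤ 12 * (2 * (m * T) ^ 2) :=
    ((pow_le_pow_left₀ (mul_nonneg (by positivity) (by linarith)) hlb 2).trans hub).trans
      (by linarith)
  have h3 : 7 * m * T * (3 / 4) ≤ (1 + ε) ^ (2 * 2 ^ q) * T * (1 - ε / 4) := by
    have : (3 : ℝ) / 4 ≤ 1 - ε / 4 := by linarith
    gcongr
  have h4 := (pow_le_pow_left₀ (by positivity) h3 2).trans h2
  have h5 : ((m : ℝ) * T) ^ 2 ≤ 0 := by nlinarith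
  have h6 : (m : ℝ) * T = 0 := by
    have := sq_nonneg ((m : ℝ) * T)
    exact pow_eq_zero_iff (two_ne_zero) |>.1 (le_antisymm h5 this)
  rw [h6] at h2
  have h7 : 0 < (1 + ε) ^ (2 * 2 ^ q) * T * (1 - ε / 4) :=
    mul_pos (by positivity) (by linarith)
  nlinarith [pow_pos h7 2]

/-- A dyadic exponent of logarithmic size. -/
lemma exists_two_pow_between {x : ℝ} (hx : 1 ≤ x) : ∃ q : ℕ, x ≤ 2 ^ q ∧ (2 : ℝ) ^ q ≤ 2 * x := by
  obtain ⟨q, h1, h2⟩ := exists_nat_pow_near hx (one_lt_two)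
  exact ⟨q + 1, h2.le, by rw [pow_succ]; linarith⟩

/-- failure of all low-degree spectral methods: for the detection problem
with null `𝒬` (i.i.d. `N(0,1/N)` entries) and planted `𝒫` (`Ỹ = YQ`, `v ∼ BR(N,ρ)`, `Q`
Haar-uniform orthogonal), there is a universal constant `C₂ > 0`, and for any constants
`ℓ ≥ 1`, `d ≥ 1`, `ε ∈ (0,1)` there exist `N₀` and `C₁ > 0`, such that for all `N ≥ N₀`:
for any symmetric matrix `M(Ỹ)` of dimension `m ≤ N^ℓ` whose entries are polynomials of
degree at most `d` in the entries of `Ỹ`, and any threshold `t > 0`, if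
`nρ ≥ √N (log N)^{C₂}` then it is impossible that both
`ℙ_𝒫{‖M‖ ≥ (1+ε)t} ≥ 1 - ε/4` and `ℙ_𝒬{‖M‖ ≥ t} ≤ N^{-C₁}`. -/
theorem stmt_13 :
    ∃ C₂ : ℝ, 0 < C₂ ∧
      ∀ (l : ℝ), 1 ≤ l → ∀ (d : ℕ), 1 ≤ d → ∀ (ε : ℝ), 0 < ε → ε < 1 →
        ∃ N₀ : ℕ, ∃ C₁ : ℝ, 0 < C₁ ∧
          ∀ N n : ℕ, ∀ ρ : ℝ, N₀ ≤ N → 1 ≤ n → n ≤ N → 0 < ρ → ρ ≤ 1 →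
            Real.sqrt N * (Real.log N) ^ C₂ ≤ (n : ℝ) * ρ →
            ∀ (μQ : Measure (Fin n → Fin n → ℝ)) [IsProbabilityMeasure μQ],
              (∀ᵐ Q ∂μQ, (Matrix.of Q)ᵀ * Matrix.of Q = 1) →
              (∀ R : Matrix (Fin n) (Fin n) ℝ, Rᵀ * R = 1 →
                Measure.map (fun Q => fun i j => (R * Matrix.of Q) i j) μQ = μQ) →
            ∀ (m : ℕ), (m : ℝ) ≤ (N : ℝ) ^ l →
            ∀ M : (Fin N → Fin n → ℝ) → Matrix (Fin m) (Fin m) ℝ,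
              (∀ Y, (M Y)ᵀ = M Y) →
              (∀ a b : Fin m, ∃ p : MvPolynomial (Fin N × Fin n) ℝ,
                p.totalDegree ≤ d ∧
                ∀ Y, M Y a b = MvPolynomial.eval (fun q => Y q.1 q.2) p) →
            ∀ t : ℝ, 0 < t →
              ¬ (ENNReal.ofReal (1 - ε / 4) ≤
                    (Measure.map
                      (fun w : (Fin N → ℝ) × (Fin n → Fin n → ℝ)
                          × (Fin N → Fin (n - 1) → ℝ) =>
                        fun i j => (gaussBasis w.1 w.2.2 * Matrix.of w.2.1) i j)
                      ((brVec N ρ).prod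
                        (μQ.prod (iidGaussVec N (n - 1) ((N : NNReal))⁻¹))))
                      {Y | (1 + ε) * t ≤ specNorm (M Y)}
                  ∧ (Measure.pi fun _ : Fin N =>
                        (Measure.pi fun _ : Fin n => gaussianReal 0 ((N : NNReal))⁻¹))
                      {Y | t ≤ specNorm (M Y)}
                    ≤ ENNReal.ofReal ((N : ℝ) ^ (-C₁))) := by
  refine ⟨5, by norm_num, fun l hl d hd ε hε0 hε1 => ?_⟩
  have hlog : 0 < Real.log (1 + ε) := Real.log_pos (by linarith)
  have hlog1 : Real.log (1 + ε) < 1 := by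
    have := Real.log_le_sub_one_of_pos (by linarith : 0 < 1 + ε)
    linarith
  set κ₀ : ℝ := (l + 2) / Real.log (1 + ε) with hκ₀
  have hκ₀1 : 1 ≤ κ₀ := by
    rw [hκ₀, le_div_iff₀ hlog]
    linarith
  set κ : ℝ := 4 * d * κ₀ with hκ
  have hd' : (1 : ℝ) ≤ d := by exact_mod_cast hd
  have hκ0 : 0 < κ := by positivity
  have h9 : 0 < Real.log 9 := Real.log_pos (by norm_num)
  refine ⟨max 7 ⌈Real.exp (4 * κ ^ 9)⌉₊, 2 * κ * Real.log 9 + 2, by positivity, ?_⟩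
  intro N n ρ hN hn hnN h0 h1 hρ μQ _ hQ hinv m hm M hsymm hM t ht ⟨hP, hNull⟩
  have hN7 : (7 : ℝ) ≤ N := by exact_mod_cast (le_max_left _ _).trans hN
  have hN0 : (0 : ℝ) < N := by linarith
  have hNe : Real.exp (4 * κ ^ 9) ≤ N :=
    (Nat.le_ceil _).trans (by exact_mod_cast (le_max_right _ _).trans hN)
  have hLκ : 4 * κ ^ 9 ≤ Real.log N := (Real.le_log_iff_exp_le hN0).2 hNe
  have hL1 : 1 ≤ Real.log N := by
    rw [Real.le_log_iff_exp_le hN0]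
    have := Real.exp_one_lt_d9
    linarith
  obtain ⟨q, hq1, hq2⟩ := exists_two_pow_between (x := κ₀ * Real.log N)
    (one_le_mul_of_one_le_of_one_le hκ₀1 hL1)
  have hDle : ((2 * (2 ^ q * d) : ℕ) : ℝ) ≤ κ * Real.log N := by
    push_cast
    calc (2 : ℝ) * (2 ^ q * d) ≤ 2 * (2 * (κ₀ * Real.log N) * d) := by gcongr
      _ = κ * Real.log N := by rw [hκ]; ring
  refine specNorm_not_distinguish (q := q) hQ hinv hn hnN h0 h1 hε0 hε1 ht rfl hd ?_
    (by positivity) ?_ ?_ hsymm hM hP hNull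
  · have e : (5 : ℝ) = ((5 : ℕ) : ℝ) := by norm_num
    rw [e, Real.rpow_natCast] at hρ
    calc 4 * ((2 * (2 ^ q * d) : ℕ) : ℝ) ^ 9 * N ≤ 4 * (κ * Real.log N) ^ 9 * N := by gcongr
      _ = 4 * κ ^ 9 * (Real.log N ^ 9 * N) := by ring
      _ ≤ Real.log N * (Real.log N ^ 9 * N) := by gcongr
      _ = (√N * Real.log N ^ 5) ^ 2 := by
        rw [mul_pow, Real.sq_sqrt hN0.le]
        ring
      _ ≤ (n * ρ) ^ 2 := by gcongr
  · have e9 : ((9 : ℝ) ^ (2 * (2 ^ q * d))) ^ 2 ≤ (N : ℝ) ^ (2 * κ * Real.log 9) := by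
      rw [← pow_mul, ← Real.rpow_natCast, Real.rpow_def_of_pos (by norm_num : (0 : ℝ) < 9),
        Real.rpow_def_of_pos hN0, Real.exp_le_exp]
      push_cast at hDle ⊢
      nlinarith
    calc _ ≤ (N : ℝ) ^ (2 * κ * Real.log 9) * (N : ℝ) ^ (-(2 * κ * Real.log 9 + 2)) := by gcongr
      _ = ((N : ℝ) ^ 2)⁻¹ := by
        rw [← Real.rpow_add hN0, ← Real.rpow_natCast, ← Real.rpow_neg hN0.le]
        congr 1
        push_cast
        ring
      _ ≤ 1 / 4 := by
        rw [one_div]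
        gcongr
        nlinarith
  · have hlt : (N : ℝ) ^ (2 * (l + 2)) ≤ (1 + ε) ^ (2 * 2 ^ q) := by
      rw [← Real.rpow_natCast, Real.rpow_def_of_pos (by linarith : 0 < 1 + ε),
        Real.rpow_def_of_pos hN0, Real.exp_le_exp]
      push_cast
      have := mul_le_mul_of_nonneg_left hq1 hlog.le
      rw [hκ₀] at this
      field_simp at this
      nlinarith
    refine lt_of_lt_of_le ?_ hlt
    calc 7 * (m : ℝ) ≤ (N : ℝ) ^ (1 : ℝ) * (N : ℝ) ^ l := by
          rw [Real.rpow_one]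
          gcongr
      _ = (N : ℝ) ^ (1 + l) := by rw [Real.rpow_add hN0]
      _ < (N : ℝ) ^ (2 * (l + 2)) :=
        Real.rpow_lt_rpow_of_exponent_lt (by linarith) (by linarith)
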